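/- Let π be a right-angled Artin group with defining graph Γ. Suppose Γ is the union of two induced subgraphs Γ₁ and Γ₂ intersecting in the induced subgraph Γ₀ = Γ₁ ∩ Γ₂, where: Γ₁ and Γ₂ are connected and their flag complexes are 2-connected, and Γ₀ is a disjoint union of vertices. Then Hom_Λ(H²(π; Λ), Λ) = 0. -/

import Mathlib

open Finset

/-- The integral group ring `ℤ[π]`. -/
abbrev GroupRing (π : Type) [Group π] : Type := MonoidAlgebra ℤ π

variable (π : Type) [Group π]

/-- The differential of the inhomogeneous cochain complex computing the group cohomology
`H^*(π; M)` of a left `ℤ[π]`-module `M`. -/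
noncomputable def cochainD (M : Type) [AddCommGroup M] [Module (GroupRing π) M] (n : ℕ) :
    ((Fin n → π) → M) →+ ((Fin (n + 1) → π) → M) where
  toFun f g := (MonoidAlgebra.single (g 0) (1 : ℤ)) • f (fun i => g i.succ)
      + ∑ j : Fin (n + 1), ((-1 : ℤ) ^ ((j : ℕ) + 1)) • f (Fin.contractNth j (· * ·) g)
  map_zero' := by
    funext g; simp
  map_add' f₁ f₂ := by
    funext g
    simp only [Pi.add_apply, smul_add, Finset.sum_add_distrib]
    abel

/-- Inhomogeneous `n`-cocycles. -/
noncomputable def cocyclesGen (M : Type) [AddCommGroup M] [Module (GroupRing π) M] (n : ℕ) :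
    AddSubgroup ((Fin n → π) → M) :=
  (cochainD π M n).ker

/-- Inhomogeneous `n`-coboundaries. -/
noncomputable def coboundariesGen (M : Type) [AddCommGroup M] [Module (GroupRing π) M] :
    (n : ℕ) → AddSubgroup ((Fin n → π) → M)
  | 0 => ⊥
  | (n + 1) => (cochainD π M n).range

/-- The group cohomology `H^n(π; M)`, as an abelian group. -/
noncomputable def groupCoh (M : Type) [AddCommGroup M] [Module (GroupRing π) M] (n : ℕ) : Type :=
  (cocyclesGen π M n) ⧸ ((coboundariesGen π M n).addSubgroupOf (cocyclesGen π M n))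

noncomputable instance (M : Type) [AddCommGroup M] [Module (GroupRing π) M] (n : ℕ) :
    AddCommGroup (groupCoh π M n) := by
  unfold groupCoh; infer_instance

/-- `cd π ≤ n` : the cohomological dimension of `π` is at most `n`, i.e. `H^i(π; M) = 0`
for all `i > n` and all `ℤ[π]`-modules `M`. -/
def cdLE (n : ℕ) : Prop :=
  ∀ (M : Type) (_ : AddCommGroup M) (_ : Module (GroupRing π) M) (i : ℕ), n < i →
    Subsingleton (groupCoh π M i)

/-- `π` is a finitely presented group. -/
def IsFinitelyPresented : Prop :=
  ∃ (m : ℕ) (rels : Finset (FreeGroup (Fin m))),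
    Nonempty (PresentedGroup (rels : Set (FreeGroup (Fin m))) ≃* π)

/-- The cochain differential with group ring coefficients is right `ℤ[π]`-linear
(where right modules are left modules over the opposite ring). -/
noncomputable def cochainDOp (n : ℕ) :
    ((Fin n → π) → GroupRing π) →ₗ[(GroupRing π)ᵐᵒᵖ] ((Fin (n + 1) → π) → GroupRing π) where
  toFun := cochainD π (GroupRing π) n
  map_add' := (cochainD π (GroupRing π) n).map_add
  map_smul' a f := by
    funext g
    simp only [cochainD, AddMonoidHom.coe_mk, ZeroHom.coe_mk, Pi.smul_apply,
      MulOpposite.smul_eq_mul_unop, smul_eq_mul, RingHom.id_apply]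
    rw [add_mul, Finset.sum_mul, ← mul_assoc]
    congr 1
    refine Finset.sum_congr rfl fun j _ => ?_
    rw [smul_mul_assoc]

/-- Cocycles with group ring coefficients, as a right `ℤ[π]`-submodule. -/
noncomputable def cocyclesΛ (n : ℕ) :
    Submodule (GroupRing π)ᵐᵒᵖ ((Fin n → π) → GroupRing π) :=
  LinearMap.ker (cochainDOp π n)

/-- Coboundaries with group ring coefficients, as a right `ℤ[π]`-submodule. -/
noncomputable def coboundariesΛ :
    (n : ℕ) → Submodule (GroupRing π)ᵐᵒᵖ ((Fin n → π) → GroupRing π)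
  | 0 => ⊥
  | (n + 1) => LinearMap.range (cochainDOp π n)

/-- The group cohomology `H^n(π; ℤ[π])` with group ring coefficients,
as a right `ℤ[π]`-module. -/
noncomputable def groupCohΛ (n : ℕ) : Type :=
  (cocyclesΛ π n) ⧸ ((coboundariesΛ π n).comap (cocyclesΛ π n).subtype)

noncomputable instance (n : ℕ) : AddCommGroup (groupCohΛ π n) := by
  unfold groupCohΛ; infer_instance

noncomputable instance (n : ℕ) : Module (GroupRing π)ᵐᵒᵖ (groupCohΛ π n) := by
  unfold groupCohΛ; infer_instance

/-- The commutator relations defining a right-angled Artin group: one commutator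
`[v, w] = v w v⁻¹ w⁻¹` for each edge `{v, w}` of the defining graph. -/
def raagRels (V : Type) (Γ : SimpleGraph V) : Set (FreeGroup V) :=
  {r | ∃ v w : V, Γ.Adj v w ∧
    r = FreeGroup.of v * FreeGroup.of w * (FreeGroup.of v)⁻¹ * (FreeGroup.of w)⁻¹}

/-- The right-angled Artin group defined by the simplicial graph `Γ`. -/
def RAAGroup (V : Type) (Γ : SimpleGraph V) : Type := PresentedGroup (raagRels V Γ)

instance (V : Type) (Γ : SimpleGraph V) : Group (RAAGroup V Γ) :=
  inferInstanceAs (Group (PresentedGroup (raagRels V Γ)))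

/-- The generator of a right-angled Artin group corresponding to a vertex. -/
def RAAGroup.of {V : Type} {Γ : SimpleGraph V} (v : V) : RAAGroup V Γ :=
  PresentedGroup.of v

/-- The geometric realization of the flag complex of a finite simplicial graph `Γ`: the
space of probability weightings of the vertices whose support spans a clique (i.e. a simplex
of the flag complex), topologized as a subspace of `V → ℝ`. -/
def flagRealization (V : Type) [Fintype V] (Γ : SimpleGraph V) : Type :=
  {w : V → ℝ // (∀ v, 0 ≤ w v) ∧ (∑ v, w v) = 1 ∧
    ∀ v u : V, w v ≠ 0 → w u ≠ 0 → v ≠ u → Γ.Adj v u}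

noncomputable instance (V : Type) [Fintype V] (Γ : SimpleGraph V) :
    TopologicalSpace (flagRealization V Γ) := by
  unfold flagRealization; infer_instance

/-- A topological space is 2-connected if it is nonempty and all of its homotopy groups
`π_n`, `n ≤ 2`, are trivial. -/
def TwoConnected (X : Type) [TopologicalSpace X] : Prop :=
  Nonempty X ∧ ∀ (x : X) (n : ℕ), n ≤ 2 → Subsingleton (HomotopyGroup (Fin n) X x)

section FlagComplexCohomology

/-- The set of probability weightings of the vertices supported on a clique. -/
def flagSet (W : Type) [Fintype W] (G : SimpleGraph W) : Set (W → ℝ) :=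
  {w | (∀ v, 0 ≤ w v) ∧ (∑ v, w v) = 1 ∧ ∀ v u : W, w v ≠ 0 → w u ≠ 0 → v ≠ u → G.Adj v u}

theorem simplyConnectedSpace_of_twoConnected {X : Type} [TopologicalSpace X]
    (h : TwoConnected X) : SimplyConnectedSpace X := by
  obtain ⟨⟨x₀⟩, h⟩ := h
  rw [simply_connected_iff_loops_nullhomotopic]
  refine ⟨⟨⟨x₀⟩, fun x y => ?_⟩, fun x γ => ?_⟩
  · have := h x 0 (by norm_num)
    have h0 : Subsingleton (ZerothHomotopy X) :=
      (HomotopyGroup.pi0EquivZerothHomotopy (X := X) (x := x)).symm.subsingleton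
    exact Quotient.exact (h0.elim (Quotient.mk _ x) (Quotient.mk _ y))
  · have := h x 1 (by norm_num)
    have h1 : Subsingleton (Path.Homotopic.Quotient x x) :=
      (HomotopyGroup.pi1EquivFundamentalGroup (X := X) (x := x)).symm.subsingleton
    exact Quotient.exact (h1.elim (Quotient.mk _ γ) (Quotient.mk _ (Path.refl x)))

variable {W : Type} [Fintype W] {G : SimpleGraph W}

theorem exists_pos_of_mem_flagSet {w : W → ℝ} (hw : w ∈ flagSet W G) : ∃ v, 0 < w v := by
  by_contra! h
  have : ∑ v, w v ≤ 0 := Finset.sum_nonpos fun v _ => h v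
  have := hw.2.1
  linarith

/-- A convex combination of two points of the flag complex lying in a common simplex. -/
theorem segment_mem_flagSet {x y : W → ℝ} (hx : x ∈ flagSet W G) (hy : y ∈ flagSet W G)
    (hxy : ∀ v, x v ≠ 0 → y v ≠ 0) {a b : ℝ} (ha : 0 ≤ a) (hb : 0 ≤ b) (hab : a + b = 1) :
    a • x + b • y ∈ flagSet W G := by
  have key : ∀ v, (a • x + b • y) v ≠ 0 → y v ≠ 0 := by
    intro v hv hyv
    by_cases hxv : x v = 0
    · simp [hxv, hyv] at hv
    · exact hxy v hxv hyv
  refine ⟨fun v => ?_, ?_, fun v u hv hu => hy.2.2 v u (key v hv) (key u hu)⟩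
  · have := hx.1 v; have := hy.1 v
    simp only [Pi.add_apply, Pi.smul_apply, smul_eq_mul]; positivity
  · simp only [Pi.add_apply, Pi.smul_apply, smul_eq_mul, Finset.sum_add_distrib,
      ← Finset.mul_sum, hx.2.1, hy.2.1, mul_one, hab]

instance : LocallyPathConnectedSpace (flagSet W G) := by
  have hδ : ∀ x : flagSet W G, ∃ δ > 0, ∀ y : flagSet W G, dist y x < δ →
      ∀ v, x.1 v ≠ 0 → y.1 v ≠ 0 := by
    intro x
    obtain ⟨v₀, hv₀⟩ := exists_pos_of_mem_flagSet x.2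
    classical
    obtain ⟨m, hm0, hm⟩ := Finset.exists_min_image (Finset.univ.filter fun v => x.1 v ≠ 0) x.1
      ⟨v₀, by simp [hv₀.ne']⟩
    have hpos : ∀ v, x.1 v ≠ 0 → 0 < x.1 v := fun v hv => lt_of_le_of_ne (x.2.1 v) hv.symm
    replace hm0 : x.1 m ≠ 0 := (Finset.mem_filter.1 hm0).2
    refine ⟨x.1 m, hpos m hm0, fun y hy v hv hyv => ?_⟩
    have h1 : dist (y.1 v) (x.1 v) < x.1 m := (dist_le_pi_dist y.1 x.1 v).trans_lt hy
    rw [hyv, dist_zero_left, Real.norm_of_nonneg (x.2.1 v)] at h1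
    exact absurd (hm v (by simp [hv])) (not_le.2 h1)
  choose δ hδ0 hδ using hδ
  refine LocallyPathConnectedSpace.of_bases (p := fun x r => 0 < r ∧ r ≤ δ x)
    (s := fun x r => Metric.ball x r) (fun x => ?_) ?_
  · exact Metric.nhds_basis_ball.restrict fun r hr =>
      ⟨min r (δ x), lt_min hr (hδ0 x), min_le_right _ _, Metric.ball_subset_ball (min_le_left _ _)⟩
  · intro x r hr
    rw [Topology.IsInducing.subtypeVal.isPathConnected_iff]
    have hsc : StarConvex ℝ x.1 (Subtype.val '' Metric.ball x r) := by
      rintro _ ⟨y, hy, rfl⟩ a b ha hb hab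
      have hmem := segment_mem_flagSet x.2 y.2
        (hδ x y (lt_of_lt_of_le hy hr.2)) ha hb hab
      refine ⟨⟨_, hmem⟩, ?_, rfl⟩
      have := (convex_ball x.1 r) (Metric.mem_ball_self hr.1) (show y.1 ∈ Metric.ball x.1 r from hy)
        ha hb hab
      exact this
    exact hsc.isPathConnected ⟨x, Metric.mem_ball_self hr.1, rfl⟩

/-- Integral one-cocycles on a simply connected flag complex are coboundaries. -/
theorem exists_potential_of_simplyConnected [SimplyConnectedSpace (flagSet W G)]
    (κ : W → W → ℤ) (hdiag : ∀ v, κ v v = 0) (hanti : ∀ v w, G.Adj v w → κ v w = -κ w v)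
    (htri : ∀ u v w, G.Adj u v → G.Adj v w → G.Adj u w → κ u v + κ v w = κ u w) :
    ∃ h : W → ℤ, ∀ v w, G.Adj v w → κ v w = h w - h v := by
  classical
  let φ : W → (W → ℝ) → ℝ := fun v x => ∑ u, x u * κ v u
  choose base hbase using fun x : flagSet W G => exists_pos_of_mem_flagSet x.2
  let f : flagSet W G → Circle := fun x => Circle.exp (φ (base x) x.1 * (2 * Real.pi))
  have hf : ∀ (x : flagSet W G) (v : W), x.1 v ≠ 0 →
      f x = Circle.exp (φ v x.1 * (2 * Real.pi)) := by
    intro x v hv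
    have hb := (hbase x).ne'
    refine Circle.exp_eq_exp.2 ⟨κ (base x) v, ?_⟩
    have : φ (base x) x.1 = φ v x.1 + κ (base x) v := by
      have hterm : ∀ u, x.1 u * (κ (base x) u : ℝ) = x.1 u * κ v u + x.1 u * κ (base x) v := by
        intro u
        by_cases hu : x.1 u = 0
        · simp [hu]
        have : κ (base x) u = κ v u + κ (base x) v := by
          rcases eq_or_ne (base x) v with h1 | h1
          · rw [← h1, hdiag]; ring
          rcases eq_or_ne u v with h2 | h2
          · rw [h2, hdiag]; ring
          have a1 := x.2.2.2 _ _ hb hv h1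
          rcases eq_or_ne u (base x) with h3 | h3
          · rw [h3, hdiag, hanti _ _ a1]; ring
          have a2 := x.2.2.2 _ _ hb hu h3.symm
          have a3 := x.2.2.2 _ _ hv hu h2.symm
          have := htri _ _ _ a1 a3 a2
          omega
        rw [this]; push_cast; ring
      simp only [φ]
      rw [Finset.sum_congr rfl fun u _ => hterm u, Finset.sum_add_distrib, ← Finset.sum_mul,
        x.2.2.1, one_mul]
    rw [this]; ring
  have hcont : Continuous f := by
    rw [continuous_iff_continuousAt]
    intro x
    have hev : ∀ᶠ y : flagSet W G in nhds x, y.1 (base x) ≠ 0 := by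
      have : ContinuousAt (fun y : flagSet W G => y.1 (base x)) x :=
        ((continuous_apply (base x)).comp continuous_subtype_val).continuousAt
      exact this.eventually_ne (hbase x).ne'
    have hc : ContinuousAt
        (fun y : flagSet W G => Circle.exp (φ (base x) y.1 * (2 * Real.pi))) x := by
      apply Circle.exp.continuous.continuousAt.comp
      have hφ : Continuous (φ (base x)) :=
        continuous_finsetSum _ fun u _ => (continuous_apply u).mul continuous_const
      exact ((hφ.comp continuous_subtype_val).mul continuous_const).continuousAt
    exact hc.congr (hev.mono fun y hy => (hf y _ hy).symm)
  have hvert : ∀ v : W, (Pi.single v 1 : W → ℝ) ∈ flagSet W G := by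
    intro v
    refine ⟨fun u => ?_, by simp, fun u u' hu hu' huu => ?_⟩
    · by_cases h : u = v
      · subst h; simp
      · simp [h]
    · have h1 : u = v := by by_contra h; simp [h] at hu
      have h2 : u' = v := by by_contra h; simp [h] at hu'
      exact absurd (h1.trans h2.symm) huu
  let e : W → flagSet W G := fun v => ⟨Pi.single v 1, hvert v⟩
  have hfe : ∀ v, f (e v) = 1 := by
    intro v
    rw [hf (e v) v (by simp [e])]
    simp [φ, e, Pi.single_apply, hdiag]
  obtain ⟨x₀⟩ : Nonempty (flagSet W G) := inferInstance
  obtain ⟨θ, hθ⟩ := Circle.exp_surjective (f x₀)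
  obtain ⟨F, ⟨-, hF⟩, -⟩ := Circle.isCoveringMap_exp.existsUnique_continuousMap_lifts
    ⟨f, hcont⟩ x₀ θ hθ
  have hF' : ∀ x, Circle.exp (F x) = f x := fun x => congrFun hF x
  have hmult : ∀ v, ∃ n : ℤ, F (e v) = n * (2 * Real.pi) := fun v =>
    Circle.exp_eq_one.1 ((hF' _).trans (hfe v))
  choose h hh using hmult
  refine ⟨h, fun v w hvw => ?_⟩
  have hpath : ∀ t : unitInterval,
      ((1 - t : ℝ) • Pi.single v 1 + (t : ℝ) • Pi.single w 1 : W → ℝ) ∈ flagSet W G := by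
    intro t
    refine ⟨fun u => ?_, ?_, fun u u' hu hu' huu => ?_⟩
    · have h0 := t.2.1; have h1 := sub_nonneg.2 t.2.2
      have h2 := (hvert v).1 u; have h3 := (hvert w).1 u
      simp only [Pi.add_apply, Pi.smul_apply, smul_eq_mul]; positivity
    · simp only [Pi.add_apply, Pi.smul_apply, smul_eq_mul, Finset.sum_add_distrib,
        ← Finset.mul_sum, (hvert v).2.1, (hvert w).2.1]
      ring
    · have key : ∀ z, ((1 - t : ℝ) • Pi.single v 1 + (t : ℝ) • Pi.single w 1 : W → ℝ) z ≠ 0 →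
          z = v ∨ z = w := by
        intro z hz
        by_contra! hc
        simp [hc.1, hc.2] at hz
      rcases key u hu with rfl | rfl <;> rcases key u' hu' with rfl | rfl
      · exact absurd rfl huu
      · exact hvw
      · exact hvw.symm
      · exact absurd rfl huu
  let γ : unitInterval → flagSet W G := fun t => ⟨_, hpath t⟩
  have hγ : Continuous γ := by
    refine Continuous.subtype_mk ?_ _
    fun_prop
  have hγ0 : γ 0 = e v := Subtype.ext (by simp [γ, e])
  have hγ1 : γ 1 = e w := Subtype.ext (by simp [γ, e])
  have hne : v ≠ w := hvw.ne
  have hφv : ∀ t : unitInterval, φ v (γ t).1 = t * κ v w := by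
    intro t
    simp only [φ, γ, Pi.add_apply, Pi.smul_apply, smul_eq_mul, add_mul, Finset.sum_add_distrib]
    simp [Pi.single_apply, hdiag]
  have hφw : ∀ t : unitInterval, φ w (γ t).1 = (1 - t) * κ w v := by
    intro t
    simp only [φ, γ, Pi.add_apply, Pi.smul_apply, smul_eq_mul, add_mul, Finset.sum_add_distrib]
    simp [Pi.single_apply, hdiag]
  have hlift := Circle.isCoveringMap_exp.eq_of_comp_eq (g₁ := fun t => F (γ t))
    (g₂ := fun t => F (e v) + (t : ℝ) * κ v w * (2 * Real.pi))
    (F.continuous.comp hγ) (by fun_prop) ?_ 0 (by simp [hγ0])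
  · have h1 := congrFun hlift 1
    simp only [hγ1, hh, Set.Icc.coe_one, one_mul] at h1
    have h2 : (h w : ℝ) = h v + κ v w := by
      have : (2 * Real.pi) ≠ 0 := by positivity
      apply mul_right_cancel₀ this
      rw [h1]; ring
    have h3 : h w = h v + κ v w := by exact_mod_cast h2
    omega
  · funext t
    simp only [Function.comp_apply]
    rw [hF', Circle.exp_add, hF', hfe, one_mul]
    by_cases ht : (γ t).1 v ≠ 0
    · rw [hf _ _ ht, hφv]
    · have ht1 : (t : ℝ) = 1 := by
        have : (γ t).1 v = 1 - t := by simp [γ, hne]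
        rw [not_not, this] at ht
        linarith
      rw [hf (γ t) w (by simp [γ, ht1]), hφw, ht1]
      simpa [mul_comm] using (Circle.exp_two_pi_mul_int (κ v w)).symm

/-- Integral one-cocycles on the part of a flag complex spanned by `S` are coboundaries when that
part is `2`-connected. -/
theorem exists_potential_of_twoConnected {V : Type} {Γ : SimpleGraph V} (S : Finset V)
    (h : TwoConnected (flagRealization ↑(↑S : Set V) (Γ.induce ↑S)))
    (κ : V → V → ℤ) (hanti : ∀ v w, Γ.Adj v w → κ v w = -κ w v)
    (htri : ∀ u v w, Γ.Adj u v → Γ.Adj v w → Γ.Adj u w → κ u v + κ v w = κ u w) :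
    ∃ p : V → ℤ, ∀ v w, v ∈ S → w ∈ S → Γ.Adj v w → κ v w = p w - p v := by
  classical
  have h' : TwoConnected (flagSet ↑(↑S : Set V) (Γ.induce ↑S)) := h
  have := simplyConnectedSpace_of_twoConnected h'
  obtain ⟨p, hp⟩ := exists_potential_of_simplyConnected (G := Γ.induce (↑S : Set V))
    (fun v w => if v = w then 0 else κ v w) (by simp)
    (fun v w hvw => by
      have h1 : v ≠ w := hvw.ne
      simpa [h1, h1.symm] using hanti _ _ hvw)
    (fun u v w huv hvw huw => by
      have h1 : u ≠ v := huv.ne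
      have h2 : v ≠ w := hvw.ne
      have h3 : u ≠ w := huw.ne
      simpa [h1, h2, h3] using htri _ _ _ huv hvw huw)
  refine ⟨fun v => if hv : v ∈ S then p ⟨v, hv⟩ else 0, fun v w hv hw hvw => ?_⟩
  have h1 : v ≠ w := hvw.ne
  simpa [hv, hw, h1] using hp ⟨v, hv⟩ ⟨w, hw⟩ hvw

end FlagComplexCohomology

section CrossedHomomorphisms

theorem addMonoidEnd_mul_apply {A : Type} [AddCommGroup A] (f g : AddMonoid.End A) (a : A) :
    (f * g) a = f (g a) := rfl

theorem exists_crossedHom_freeGroup {V A : Type} [AddCommGroup A]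
    (ρ : FreeGroup V →* AddMonoid.End A) (c : V → A) : ∃ d : FreeGroup V → A,
      (∀ g h, d (g * h) = d g + ρ g (d h)) ∧ ∀ v, d (FreeGroup.of v) = c v := by
  have hinv : ∀ g a, ρ g (ρ g⁻¹ a) = a := fun g a => by
    rw [← addMonoidEnd_mul_apply, ← map_mul, mul_inv_cancel, map_one, AddMonoid.End.one_apply]
  have hinv' : ∀ g a, ρ g⁻¹ (ρ g a) = a := fun g a => by simpa using hinv g⁻¹ a
  let Θ : FreeGroup V →* Equiv.Perm A :=
    FreeGroup.lift fun v =>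
      { toFun := fun a => ρ (FreeGroup.of v) a + c v
        invFun := fun a => ρ (FreeGroup.of v)⁻¹ (a - c v)
        left_inv := fun a => by simp only [add_sub_cancel_right, hinv']
        right_inv := fun a => by simp only [hinv, sub_add_cancel] }
  have hof : ∀ v a, Θ (FreeGroup.of v) a = ρ (FreeGroup.of v) a + c v := fun v a => by simp [Θ]
  have hΘ : ∀ g a, Θ g a = ρ g a + Θ g 0 := by
    intro g
    induction g using FreeGroup.induction_on with
    | C1 => simp
    | of v => intro a; simp [hof]
    | inv_of v h =>
      intro a
      have key : ∀ b, Θ (FreeGroup.of v)⁻¹ b = ρ (FreeGroup.of v)⁻¹ (b - c v) := by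
        intro b
        apply (Θ (FreeGroup.of v)).injective
        rw [← Equiv.Perm.mul_apply, ← map_mul, hof, hinv]
        simp
      rw [key, key, ← map_add]
      congr 1
      abel
    | mul x y hx hy =>
      intro a
      rw [map_mul, Equiv.Perm.mul_apply, Equiv.Perm.mul_apply, hy, hx, hx (Θ y 0), map_add, map_mul,
        addMonoidEnd_mul_apply, add_assoc]
  refine ⟨fun g => Θ g 0, fun g h => ?_, fun v => by simp [hof]⟩
  simp only [map_mul, Equiv.Perm.mul_apply]
  rw [hΘ, add_comm]

variable {V : Type} {Γ : SimpleGraph V}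

/-- The projection of the free group on the vertices onto the right-angled Artin group. -/
def RAAGroup.mk (V : Type) (Γ : SimpleGraph V) : FreeGroup V →* RAAGroup V Γ :=
  PresentedGroup.mk (raagRels V Γ)

theorem RAAGroup.mk_of (v : V) : RAAGroup.mk V Γ (FreeGroup.of v) = RAAGroup.of v := rfl

theorem RAAGroup.mk_surjective : Function.Surjective (RAAGroup.mk V Γ) :=
  PresentedGroup.mk_surjective _

theorem RAAGroup.mk_eq_one_iff {x : FreeGroup V} :
    RAAGroup.mk V Γ x = 1 ↔ x ∈ Subgroup.normalClosure (raagRels V Γ) :=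
  PresentedGroup.mk_eq_one_iff

theorem RAAGroup.commute_of {v w : V} (h : Γ.Adj v w) :
    Commute (RAAGroup.of v : RAAGroup V Γ) (RAAGroup.of w) := by
  have : RAAGroup.mk V Γ (FreeGroup.of v * FreeGroup.of w * (FreeGroup.of v)⁻¹ *
      (FreeGroup.of w)⁻¹) = 1 :=
    RAAGroup.mk_eq_one_iff.2 (Subgroup.subset_normalClosure ⟨v, w, h, rfl⟩)
  simp only [map_mul, map_inv, RAAGroup.mk_of] at this
  rw [mul_inv_eq_one, mul_inv_eq_iff_eq_mul] at this
  exact this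

/-- The homomorphism out of a right-angled Artin group determined by the images of the vertices. -/
theorem RAAGroup.exists_hom {H : Type} [Group H] (F : V → H)
    (hF : ∀ v w, Γ.Adj v w → Commute (F v) (F w)) :
    ∃ r : RAAGroup V Γ →* H, ∀ v, r (RAAGroup.of v) = F v := by
  have h : ∀ r ∈ raagRels V Γ, FreeGroup.lift F r = 1 := by
    rintro _ ⟨v, w, hvw, rfl⟩
    simp only [map_mul, map_inv, FreeGroup.lift_apply_of]
    rw [mul_inv_eq_one, mul_inv_eq_iff_eq_mul]
    exact hF v w hvw
  exact ⟨PresentedGroup.toGroup h, fun v => PresentedGroup.toGroup.of h⟩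

/-- A family of elements indexed by the vertices satisfying the commutation relations modulo an
invariant subgroup `N` extends to a crossed homomorphism modulo `N`. -/
theorem RAAGroup.exists_crossedHom_mod {A : Type} [AddCommGroup A]
    (ρ : RAAGroup V Γ →* AddMonoid.End A) (N : AddSubgroup A) (hN : ∀ g, ∀ a ∈ N, ρ g a ∈ N)
    (c : V → A) (hc : ∀ v w, Γ.Adj v w →
      (ρ (RAAGroup.of v) (c w) - c w) - (ρ (RAAGroup.of w) (c v) - c v) ∈ N) :
    ∃ D : RAAGroup V Γ → A, (∀ g h, ρ g (D h) - D (g * h) + D g ∈ N) ∧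
      ∀ v, D (RAAGroup.of v) - c v ∈ N := by
  obtain ⟨d, hd, hdc⟩ := exists_crossedHom_freeGroup (ρ.comp (RAAGroup.mk V Γ)) c
  simp only [MonoidHom.comp_apply] at hd
  have hd1 : d 1 = 0 := by simpa using hd 1 1
  let K : Subgroup (FreeGroup V) :=
    { carrier := {k | RAAGroup.mk V Γ k = 1 ∧ d k ∈ N}
      one_mem' := ⟨map_one _, by rw [hd1]; exact N.zero_mem⟩
      mul_mem' := by
        rintro a b ⟨ha, ha'⟩ ⟨hb, hb'⟩
        refine ⟨by rw [map_mul, ha, hb, one_mul], ?_⟩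
        rw [hd]
        exact N.add_mem ha' (hN _ _ hb')
      inv_mem' := by
        rintro a ⟨ha, ha'⟩
        refine ⟨by rw [map_inv, ha, inv_one], ?_⟩
        have := hd a a⁻¹
        rw [mul_inv_cancel, hd1, ha, map_one, AddMonoid.End.one_apply] at this
        rw [← neg_eq_of_add_eq_zero_right this.symm]
        exact N.neg_mem ha' }
  have hK : K.Normal := by
    refine ⟨fun k hk x => ⟨by rw [map_mul, map_mul, hk.1]; simp, ?_⟩⟩
    have h1 := hd x x⁻¹
    rw [mul_inv_cancel, hd1] at h1
    have h2 : d (x * k * x⁻¹) = ρ (RAAGroup.mk V Γ x) (d k) := by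
      rw [hd, hd, map_mul, hk.1, mul_one, add_right_comm, ← h1, zero_add]
    rw [h2]
    exact hN _ _ hk.2
  have hle : Subgroup.normalClosure (raagRels V Γ) ≤ K := by
    refine Subgroup.normalClosure_le_normal ?_
    rintro _ ⟨v, w, hvw, rfl⟩
    set r := FreeGroup.of v * FreeGroup.of w * (FreeGroup.of v)⁻¹ * (FreeGroup.of w)⁻¹ with hr
    have hr1 : RAAGroup.mk V Γ r = 1 :=
      RAAGroup.mk_eq_one_iff.2 (Subgroup.subset_normalClosure ⟨v, w, hvw, rfl⟩)
    refine ⟨hr1, ?_⟩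
    have h1 := hd r (FreeGroup.of w * FreeGroup.of v)
    rw [hr1, map_one, AddMonoid.End.one_apply,
      show r * (FreeGroup.of w * FreeGroup.of v) = FreeGroup.of v * FreeGroup.of w by
        rw [hr]; group, hd (FreeGroup.of v), hd (FreeGroup.of w), hdc, hdc, RAAGroup.mk_of,
        RAAGroup.mk_of] at h1
    have h2 := hc v w hvw
    convert h2 using 1
    rw [← sub_eq_iff_eq_add] at h1
    rw [← h1]
    abel
  choose s hs using RAAGroup.mk_surjective (V := V) (Γ := Γ)
  have hcong : ∀ x y, RAAGroup.mk V Γ x = RAAGroup.mk V Γ y → d x - d y ∈ N := by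
    intro x y hxy
    have hk : y⁻¹ * x ∈ K := hle (RAAGroup.mk_eq_one_iff.1 (by rw [map_mul, map_inv, hxy]; simp))
    have : d x = d y + ρ (RAAGroup.mk V Γ y) (d (y⁻¹ * x)) := by rw [← hd, mul_inv_cancel_left]
    rw [this, add_sub_cancel_left]
    exact hN _ _ hk.2
  refine ⟨fun g => d (s g), fun g h => ?_, fun v => ?_⟩
  · have h1 := hcong (s g * s h) (s (g * h)) (by rw [map_mul, hs, hs, hs])
    rw [hd, hs] at h1
    convert h1 using 1
    abel
  · have h1 := hcong (s (RAAGroup.of v)) (FreeGroup.of v) (by rw [hs, RAAGroup.mk_of])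
    rwa [hdc] at h1

theorem RAAGroup.closure_range_of :
    Subgroup.closure (Set.range (RAAGroup.of : V → RAAGroup V Γ)) = ⊤ :=
  PresentedGroup.closure_range_of _

end CrossedHomomorphisms

section Coinduced

variable {G : Type} [Group G]

/-- The action of `G` on the functions `G → ℤ[G]`, the coinduced module of `ℤ[G]`. -/
noncomputable def coindAct (G : Type) [Group G] : G →* AddMonoid.End (G → GroupRing G) where
  toFun g :=
    { toFun := fun ξ x => MonoidAlgebra.single g 1 * ξ (g⁻¹ * x)
      map_zero' := by
        funext x
        simp
      map_add' := fun ξ η => by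
        funext x
        simp [mul_add] }
  map_one' := by
    refine AddMonoidHom.ext fun ξ => funext fun x => ?_
    change MonoidAlgebra.single 1 1 * ξ (1⁻¹ * x) = ξ x
    rw [← MonoidAlgebra.one_def, one_mul, inv_one, one_mul]
  map_mul' g h := by
    refine AddMonoidHom.ext fun ξ => funext fun x => ?_
    change MonoidAlgebra.single (g * h) 1 * ξ ((g * h)⁻¹ * x) =
      MonoidAlgebra.single g 1 * (MonoidAlgebra.single h 1 * ξ (h⁻¹ * (g⁻¹ * x)))
    rw [← mul_assoc, MonoidAlgebra.single_mul_single, one_mul, mul_inv_rev, mul_assoc]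

theorem coindAct_apply (g : G) (ξ : G → GroupRing G) (x : G) :
    coindAct G g ξ x = MonoidAlgebra.single g 1 * ξ (g⁻¹ * x) := rfl

theorem coindAct_const (g : G) (a : GroupRing G) :
    coindAct G g (Function.const G a) = Function.const G (MonoidAlgebra.single g 1 * a) := rfl

/-- The constant functions in the coinduced module. -/
def constSubgroup (G : Type) [Group G] : AddSubgroup (G → GroupRing G) where
  carrier := Set.range (Function.const G)
  add_mem' := by rintro _ _ ⟨a, rfl⟩ ⟨b, rfl⟩; exact ⟨a + b, rfl⟩
  zero_mem' := ⟨0, rfl⟩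
  neg_mem' := by rintro _ ⟨a, rfl⟩; exact ⟨-a, rfl⟩

theorem coindAct_mem_constSubgroup (g : G) (a : G → GroupRing G) (ha : a ∈ constSubgroup G) :
    coindAct G g a ∈ constSubgroup G := by
  obtain ⟨a, rfl⟩ := ha
  exact ⟨_, (coindAct_const g a).symm⟩

end Coinduced

section LowDegree

variable {G : Type} [Group G]

theorem mem_cocyclesΛ_two_iff {φ : (Fin 2 → G) → GroupRing G} :
    φ ∈ cocyclesΛ G 2 ↔ ∀ a b c : G, MonoidAlgebra.single a 1 * φ ![b, c] - φ ![a * b, c]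
      + φ ![a, b * c] - φ ![a, b] = 0 := by
  have key : ∀ a b c : G, cochainDOp G 2 φ ![a, b, c] =
      MonoidAlgebra.single a 1 * φ ![b, c] - φ ![a * b, c] + φ ![a, b * c] - φ ![a, b] := by
    intro a b c
    have h0 : Fin.contractNth (0 : Fin 3) (· * ·) ![a, b, c] = ![a * b, c] := by
      funext i; fin_cases i <;> rfl
    have h1 : Fin.contractNth (1 : Fin 3) (· * ·) ![a, b, c] = ![a, b * c] := by
      funext i; fin_cases i <;> rfl
    have h2 : Fin.contractNth (2 : Fin 3) (· * ·) ![a, b, c] = ![a, b] := by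
      funext i; fin_cases i <;> rfl
    have h3 : (fun i : Fin 2 => ![a, b, c] i.succ) = ![b, c] := by
      funext i; fin_cases i <;> rfl
    change MonoidAlgebra.single a (1 : ℤ) • φ (fun i => ![a, b, c] i.succ) + ∑ j : Fin 3, _ = _
    rw [Fin.sum_univ_three, h0, h1, h2, h3]
    simp
    abel
  constructor
  · intro h a b c
    rw [← key, show cochainDOp G 2 φ = 0 from h]
    rfl
  · intro h
    change cochainDOp G 2 φ = 0
    funext g
    have hg : g = ![g 0, g 1, g 2] := by funext i; fin_cases i <;> rfl
    rw [hg, key, h]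
    rfl

theorem mem_coboundariesΛ_two {φ : (Fin 2 → G) → GroupRing G} (β : G → GroupRing G)
    (h : ∀ a b : G, φ ![a, b] = MonoidAlgebra.single a 1 * β b - β (a * b) + β a) :
    φ ∈ coboundariesΛ G 2 := by
  refine ⟨fun x => β (x 0), ?_⟩
  funext g
  have hg : g = ![g 0, g 1] := by funext i; fin_cases i <;> rfl
  rw [hg, h]
  change MonoidAlgebra.single (g 0) (1 : ℤ) • β (g 1) + ∑ j : Fin 2, _ = _
  rw [Fin.sum_univ_two]
  have h0 : Fin.contractNth (0 : Fin 2) (· * ·) ![g 0, g 1] 0 = g 0 * g 1 := rfl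
  have h1 : Fin.contractNth (1 : Fin 2) (· * ·) ![g 0, g 1] 0 = g 0 := rfl
  simp only [h0, h1]
  simp
  abel

theorem coindAct_sub_eq_of_cocycle {φ : (Fin 2 → G) → GroupRing G} (hφ : φ ∈ cocyclesΛ G 2)
    (g h : G) : coindAct G g (fun x => φ ![h, h⁻¹ * x]) - (fun x => φ ![g * h, (g * h)⁻¹ * x])
      + (fun x => φ ![g, g⁻¹ * x]) = Function.const G (φ ![g, h]) := by
  funext x
  have := mem_cocyclesΛ_two_iff.1 hφ g h (h⁻¹ * (g⁻¹ * x))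
  rw [mul_inv_cancel_left] at this
  simp only [Pi.add_apply, Pi.sub_apply, coindAct_apply, Function.const_apply, mul_inv_rev,
    mul_assoc] at this ⊢
  rwa [sub_eq_zero] at this

end LowDegree

section Edges

variable {V : Type} {Γ : SimpleGraph V}

/-- The element `v - 1` of the group ring. -/
noncomputable def genSub (Γ : SimpleGraph V) (v : V) : GroupRing (RAAGroup V Γ) :=
  MonoidAlgebra.single (RAAGroup.of v) 1 - 1

/-- The action of `v - 1` on the coinduced module. -/
noncomputable def coindSub (Γ : SimpleGraph V) (v : V) :
    AddMonoid.End (RAAGroup V Γ → GroupRing (RAAGroup V Γ)) :=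
  coindAct _ (RAAGroup.of v) - 1

theorem coindSub_apply (v : V) (ξ : RAAGroup V Γ → GroupRing (RAAGroup V Γ)) :
    coindSub Γ v ξ = coindAct _ (RAAGroup.of v) ξ - ξ := rfl

theorem coindSub_const (v : V) (a : GroupRing (RAAGroup V Γ)) :
    coindSub Γ v (Function.const _ a) = Function.const _ (genSub Γ v * a) := by
  rw [coindSub_apply, coindAct_const, genSub, sub_mul, one_mul]
  rfl

theorem coindSub_comm {v w : V} (h : Γ.Adj v w) (ξ : RAAGroup V Γ → GroupRing (RAAGroup V Γ)) :
    coindSub Γ v (coindSub Γ w ξ) = coindSub Γ w (coindSub Γ v ξ) := by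
  simp only [← addMonoidEnd_mul_apply]
  have h1 : Commute (coindAct _ (RAAGroup.of v : RAAGroup V Γ)) (coindAct _ (RAAGroup.of w)) :=
    (RAAGroup.commute_of h).map (coindAct _)
  have h2 : Commute (coindSub Γ v) (coindSub Γ w) :=
    (h1.sub_left (Commute.one_left _)).sub_right (Commute.one_right _)
  rw [h2.eq]

theorem genSub_comm {v w : V} (h : Γ.Adj v w) : Commute (genSub Γ v) (genSub Γ w) := by
  have : Commute (MonoidAlgebra.single (RAAGroup.of v : RAAGroup V Γ) (1 : ℤ))
      (MonoidAlgebra.single (RAAGroup.of w) 1) := by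
    simp only [Commute, SemiconjBy, MonoidAlgebra.single_mul_single, (RAAGroup.commute_of h).eq]
  exact (this.sub_left (Commute.one_left _)).sub_right (Commute.one_right _)

theorem const_antisymm_eq {φ : (Fin 2 → RAAGroup V Γ) → GroupRing (RAAGroup V Γ)}
    (hφ : φ ∈ cocyclesΛ (RAAGroup V Γ) 2) {v w : V} (h : Γ.Adj v w) :
    Function.const _ (φ ![RAAGroup.of v, RAAGroup.of w] - φ ![RAAGroup.of w, RAAGroup.of v]) =
      coindSub Γ v (fun x => φ ![RAAGroup.of w, (RAAGroup.of w)⁻¹ * x]) -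
      coindSub Γ w (fun x => φ ![RAAGroup.of v, (RAAGroup.of v)⁻¹ * x]) := by
  have h1 := coindAct_sub_eq_of_cocycle hφ (RAAGroup.of v) (RAAGroup.of w)
  have h2 := coindAct_sub_eq_of_cocycle hφ (RAAGroup.of w) (RAAGroup.of v)
  rw [(RAAGroup.commute_of h).eq] at h1
  rw [show ∀ a b : GroupRing (RAAGroup V Γ), Function.const (RAAGroup V Γ) (a - b) =
    Function.const _ a - Function.const _ b from fun _ _ => rfl, ← h1, ← h2, coindSub_apply,
    coindSub_apply]
  abel

/-- A family of elements of the coinduced module indexed by the edges that is the boundary of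
a family indexed by the vertices. -/
def EdgeExact (Γ : SimpleGraph V) (e : V → V → RAAGroup V Γ → GroupRing (RAAGroup V Γ)) : Prop :=
  ∃ c : V → RAAGroup V Γ → GroupRing (RAAGroup V Γ), ∀ v w, Γ.Adj v w →
    e v w = coindSub Γ v (c w) - coindSub Γ w (c v)

theorem const_injective (G : Type) [Group G] :
    Function.Injective (Function.const G : GroupRing G → G → GroupRing G) :=
  fun _ _ h => congrFun h 1

theorem exists_cocycle_of_edgeExact {e : V → V → GroupRing (RAAGroup V Γ)}
    (he : EdgeExact Γ fun v w => Function.const _ (e v w)) :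
    ∃ φ ∈ cocyclesΛ (RAAGroup V Γ) 2, ∃ m : V → GroupRing (RAAGroup V Γ), ∀ v w, Γ.Adj v w →
      φ ![RAAGroup.of v, RAAGroup.of w] - φ ![RAAGroup.of w, RAAGroup.of v] =
        e v w + (genSub Γ v * m w - genSub Γ w * m v) := by
  obtain ⟨c, hc⟩ := he
  beta_reduce at hc
  obtain ⟨D, hD, hDc⟩ := RAAGroup.exists_crossedHom_mod (coindAct (RAAGroup V Γ))
    (constSubgroup _) coindAct_mem_constSubgroup c
    (fun v w h => ⟨e v w, by rw [hc v w h]; rfl⟩)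
  choose φ hφ using hD
  choose m hm using hDc
  refine ⟨fun x => φ (x 0) (x 1), ?_, m, fun v w h => ?_⟩
  · rw [mem_cocyclesΛ_two_iff]
    intro a b c
    apply const_injective
    change Function.const _ (MonoidAlgebra.single a 1 * φ b c) - Function.const _ (φ (a * b) c) +
      Function.const _ (φ a (b * c)) - Function.const _ (φ a b) = 0
    rw [← coindAct_const, hφ, hφ, hφ, hφ]
    simp only [map_sub, map_add, map_mul, addMonoidEnd_mul_apply, mul_assoc]
    abel
  · apply const_injective
    change Function.const _ (φ (RAAGroup.of v) (RAAGroup.of w)) -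
      Function.const _ (φ (RAAGroup.of w) (RAAGroup.of v)) = Function.const _ (e v w) +
      (Function.const _ (genSub Γ v * m w) - Function.const _ (genSub Γ w * m v))
    rw [← coindSub_const, ← coindSub_const, hc v w h, hm, hm, hφ, hφ,
      (RAAGroup.commute_of h).eq]
    simp only [map_sub, coindSub_apply]
    abel

theorem mem_coboundariesΛ_of_edges {φ : (Fin 2 → RAAGroup V Γ) → GroupRing (RAAGroup V Γ)}
    (hφ : φ ∈ cocyclesΛ (RAAGroup V Γ) 2) (m : V → GroupRing (RAAGroup V Γ))
    (hm : ∀ v w, Γ.Adj v w →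
      φ ![RAAGroup.of v, RAAGroup.of w] - φ ![RAAGroup.of w, RAAGroup.of v] =
        genSub Γ v * m w - genSub Γ w * m v) :
    φ ∈ coboundariesΛ (RAAGroup V Γ) 2 := by
  set D : RAAGroup V Γ → RAAGroup V Γ → GroupRing (RAAGroup V Γ) :=
    fun g x => φ ![g, g⁻¹ * x] with hD
  have hDφ : ∀ g h, coindAct _ g (D h) - D (g * h) + D g = Function.const _ (φ ![g, h]) :=
    coindAct_sub_eq_of_cocycle hφ
  obtain ⟨d, hd, hdc⟩ := RAAGroup.exists_crossedHom_mod (coindAct (RAAGroup V Γ)) ⊥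
    (by rintro g _ rfl; exact map_zero _)
    (fun v => D (RAAGroup.of v) - Function.const _ (m v)) (by
      intro v w h
      rw [AddSubgroup.mem_bot]
      change coindSub Γ v _ - coindSub Γ w _ = 0
      have h1 := const_antisymm_eq hφ h
      rw [hm v w h] at h1
      simp only [map_sub, coindSub_const]
      rw [sub_sub_sub_comm, ← h1, sub_eq_zero]
      rfl)
  simp only [AddSubgroup.mem_bot, sub_eq_zero] at hd hdc
  have hb : ∀ g h, Function.const _ (φ ![g, h]) =
      coindAct _ g (D h - d h) - (D (g * h) - d (g * h)) + (D g - d g) := by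
    intro g h
    rw [← hDφ, map_sub, ← sub_zero (coindAct _ g (D h) - D (g * h) + D g), ← hd g h]
    abel
  have hmem : ∀ g, D g - d g ∈ constSubgroup (RAAGroup V Γ) := by
    have hmul : ∀ g h, D (g * h) - d (g * h) = coindAct _ g (D h - d h) + (D g - d g) -
        Function.const _ (φ ![g, h]) := by
      intro g h
      rw [hb]
      abel
    let K : Subgroup (RAAGroup V Γ) :=
      { carrier := {g | D g - d g ∈ constSubgroup (RAAGroup V Γ)}
        one_mem' := by
          have := hb 1 1
          rw [map_one, mul_one, AddMonoid.End.one_apply, sub_self, zero_add] at this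
          exact ⟨_, this⟩
        mul_mem' := by
          intro a b ha hb
          rw [Set.mem_ofPred_eq, hmul]
          exact sub_mem (add_mem (coindAct_mem_constSubgroup _ _ hb) ha) ⟨_, rfl⟩
        inv_mem' := by
          intro a ha
          have h1 := hmul a⁻¹ a
          have h2 := hb 1 1
          rw [map_one, mul_one, AddMonoid.End.one_apply, sub_self, zero_add] at h2
          rw [inv_mul_cancel, ← h2, eq_sub_iff_add_eq, ← sub_eq_iff_eq_add'] at h1
          rw [Set.mem_ofPred_eq, ← h1]
          exact sub_mem (add_mem ⟨_, rfl⟩ ⟨_, rfl⟩) (coindAct_mem_constSubgroup _ _ ha) }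
    have hK : K = ⊤ := by
      rw [eq_top_iff, ← RAAGroup.closure_range_of, Subgroup.closure_le]
      rintro _ ⟨v, rfl⟩
      refine ⟨m v, ?_⟩
      rw [hdc, sub_sub_cancel]
    intro g
    exact (hK ▸ Subgroup.mem_top g : g ∈ K)
  choose β hβ using hmem
  refine mem_coboundariesΛ_two β fun a b => ?_
  apply const_injective
  rw [hb, ← hβ, ← hβ, ← hβ, coindAct_const]
  rfl

theorem edge_triangle {φ : (Fin 2 → RAAGroup V Γ) → GroupRing (RAAGroup V Γ)}
    (hφ : φ ∈ cocyclesΛ (RAAGroup V Γ) 2) {e : V → V → GroupRing (RAAGroup V Γ)}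
    (he : ∀ v w, Γ.Adj v w → e v w =
      φ ![RAAGroup.of v, RAAGroup.of w] - φ ![RAAGroup.of w, RAAGroup.of v])
    {u v w : V} (huv : Γ.Adj u v) (hvw : Γ.Adj v w) (huw : Γ.Adj u w) :
    genSub Γ u * e v w - genSub Γ v * e u w + genSub Γ w * e u v = 0 := by
  apply const_injective
  change Function.const _ (genSub Γ u * e v w) - Function.const _ (genSub Γ v * e u w) +
    Function.const _ (genSub Γ w * e u v) = 0
  rw [← coindSub_const, ← coindSub_const, ← coindSub_const, he v w hvw, he u w huw, he u v huv,
    const_antisymm_eq hφ hvw, const_antisymm_eq hφ huw, const_antisymm_eq hφ huv]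
  simp only [map_sub]
  rw [coindSub_comm huv, coindSub_comm hvw, coindSub_comm huw]
  abel

end Edges

section Operators

variable {V : Type} {Γ : SimpleGraph V}

/-- The exponent sum of a vertex. -/
theorem RAAGroup.exists_exponent (Γ : SimpleGraph V) (v : V) :
    ∃ r : RAAGroup V Γ → ℤ, (∀ g h, r (g * h) = r g + r h) ∧ r (RAAGroup.of v) = 1 ∧
      ∀ u, u ≠ v → r (RAAGroup.of u) = 0 := by
  classical
  obtain ⟨r, hr⟩ := RAAGroup.exists_hom (Γ := Γ) (H := Multiplicative ℤ)
    (fun u => if u = v then Multiplicative.ofAdd 1 else 1) (fun _ _ _ => Commute.all _ _)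
  refine ⟨fun g => (r g).toAdd, fun g h => by simp, by simp [hr], fun u hu => ?_⟩
  simp [hr, hu]

theorem genSub_mul_injective (v : V) {a : GroupRing (RAAGroup V Γ)} (h : genSub Γ v * a = 0) :
    a = 0 := by
  obtain ⟨r, hmul, hv, -⟩ := RAAGroup.exists_exponent Γ v
  by_contra ha
  have hne : a.coeff.support.Nonempty := by
    rw [Finsupp.support_nonempty_iff]
    exact fun h0 => ha (by ext x; simp [h0])
  obtain ⟨x, hx, hmax⟩ := Finset.exists_max_image _ r hne
  rw [genSub, sub_mul, one_mul, sub_eq_zero] at h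
  have hx' : a.coeff (RAAGroup.of v * x) = a.coeff x := by
    conv_lhs => rw [← h]
    rw [MonoidAlgebra.coeff_single_mul_apply, inv_mul_cancel_left, one_mul]
  have := hmax (RAAGroup.of v * x) (by
    rw [Finsupp.mem_support_iff, hx']
    exact Finsupp.mem_support_iff.1 hx)
  rw [hmul, hv] at this
  omega

theorem exists_genSub_mul_eq_zpow_sub (v : V) (n : ℤ) : ∃ b : GroupRing (RAAGroup V Γ),
    genSub Γ v * b = MonoidAlgebra.single (RAAGroup.of v ^ n) 1 - 1 := by
  induction n using Int.induction_on with
  | zero => exact ⟨0, by simp [MonoidAlgebra.one_def]⟩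
  | succ n ih =>
    obtain ⟨b, hb⟩ := ih
    refine ⟨b + MonoidAlgebra.single (RAAGroup.of v ^ (n : ℤ)) 1, ?_⟩
    rw [mul_add, hb, genSub, sub_mul, MonoidAlgebra.single_mul_single, zpow_add_one,
      (Commute.self_zpow _ _).eq]
    simp
  | pred n ih =>
    obtain ⟨b, hb⟩ := ih
    refine ⟨b - MonoidAlgebra.single (RAAGroup.of v ^ (-(n : ℤ) - 1)) 1, ?_⟩
    rw [mul_sub, hb, genSub, sub_mul, MonoidAlgebra.single_mul_single, ← zpow_one_add,
      add_sub_cancel]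
    simp

theorem exists_leftInverse_genSub (Γ : SimpleGraph V) :
    ∃ Q : V → AddMonoid.End (GroupRing (RAAGroup V Γ)),
      (∀ v a, Q v (genSub Γ v * a) = a) ∧
      (∀ v w, Γ.Adj v w → ∀ a, Q v (genSub Γ w * a) = genSub Γ w * Q v a) ∧
      ∀ v w, Γ.Adj v w → ∀ a, Q v (Q w a) = Q w (Q v a) := by
  choose r hmul hv hu using RAAGroup.exists_exponent (V := V) Γ
  have hone : ∀ v, r v 1 = 0 := fun v => by simpa using hmul v 1 1
  have hzpow : ∀ v w, v ≠ w → ∀ n : ℤ, r v (RAAGroup.of w ^ n) = 0 := by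
    intro v w hvw n
    induction n using Int.induction_on with
    | zero => rw [zpow_zero, hone]
    | succ n ih => rw [zpow_add_one, hmul, ih, hu v w hvw.symm, add_zero]
    | pred n ih =>
      have := hmul v (RAAGroup.of w ^ (-(n : ℤ) - 1)) (RAAGroup.of w)
      rw [← zpow_add_one, sub_add_cancel, ih, hu v w hvw.symm, add_zero] at this
      exact this.symm
  let P : V → AddMonoid.End (GroupRing (RAAGroup V Γ)) := fun v => AddMonoidHom.mk'
    (MonoidAlgebra.mapDomain fun g => RAAGroup.of v ^ (-r v g) * g)
    (fun _ _ => MonoidAlgebra.mapDomain_add ..)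
  have hP : ∀ v g n, P v (MonoidAlgebra.single g n) =
      MonoidAlgebra.single (RAAGroup.of v ^ (-r v g) * g) n :=
    fun v g n => MonoidAlgebra.mapDomain_single
  have hPX : ∀ v a, P v (MonoidAlgebra.single (RAAGroup.of v) 1 * a) = P v a := by
    intro v a
    induction a using MonoidAlgebra.induction_linear with
    | zero => simp
    | add x y hx hy => rw [mul_add, map_add, map_add, hx, hy]
    | single g n =>
      rw [MonoidAlgebra.single_mul_single, hP, hP, hmul, hv, neg_add_rev, zpow_add, zpow_neg_one,
        one_mul, mul_assoc, inv_mul_cancel_left]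
  have hPw : ∀ v w, Γ.Adj v w → ∀ a, P v (MonoidAlgebra.single (RAAGroup.of w) 1 * a) =
      MonoidAlgebra.single (RAAGroup.of w) 1 * P v a := by
    intro v w h a
    induction a using MonoidAlgebra.induction_linear with
    | zero => simp
    | add x y hx hy => rw [mul_add, map_add, map_add, hx, hy, mul_add]
    | single g n =>
      rw [MonoidAlgebra.single_mul_single, hP, hP, hmul, hu v w h.ne', zero_add,
        MonoidAlgebra.single_mul_single, ← mul_assoc, ← mul_assoc,
        ((RAAGroup.commute_of h).zpow_left _).eq]
  have hPP : ∀ v w, Γ.Adj v w → ∀ a, P v (P w a) = P w (P v a) := by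
    intro v w h a
    induction a using MonoidAlgebra.induction_linear with
    | zero => simp
    | add x y hx hy => simp only [map_add, hx, hy]
    | single g n =>
      rw [hP, hP, hP, hP, hmul, hmul, hzpow v w h.ne, hzpow w v h.ne', zero_add, zero_add,
        ← mul_assoc, ← mul_assoc, ((RAAGroup.commute_of h).zpow_zpow _ _).eq]
  have hPg : ∀ v a, P v (genSub Γ v * a) = 0 := fun v a => by
    rw [genSub, sub_mul, one_mul, map_sub, hPX, sub_self]
  have hPgw : ∀ v w, Γ.Adj v w → ∀ a, P v (genSub Γ w * a) = genSub Γ w * P v a :=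
    fun v w h a => by rw [genSub, sub_mul, one_mul, map_sub, hPw v w h, sub_mul, one_mul]
  have hdiv : ∀ v a, ∃ b, genSub Γ v * b = a - P v a := by
    intro v a
    induction a using MonoidAlgebra.induction_linear with
    | zero => exact ⟨0, by simp⟩
    | add x y hx hy =>
      obtain ⟨b, hb⟩ := hx
      obtain ⟨c, hc⟩ := hy
      exact ⟨b + c, by rw [mul_add, hb, hc, map_add]; abel⟩
    | single g n =>
      obtain ⟨b, hb⟩ := exists_genSub_mul_eq_zpow_sub (Γ := Γ) v (r v g)
      refine ⟨b * MonoidAlgebra.single (RAAGroup.of v ^ (-r v g) * g) n, ?_⟩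
      rw [← mul_assoc, hb, hP, sub_mul, MonoidAlgebra.single_mul_single, one_mul, one_mul,
        zpow_neg, mul_inv_cancel_left]
  choose q hq using hdiv
  have hinj : ∀ v (a b : GroupRing (RAAGroup V Γ)), genSub Γ v * a = genSub Γ v * b → a = b :=
    fun v a b h => sub_eq_zero.1 (genSub_mul_injective v (by rw [mul_sub, h, sub_self]))
  have hqX : ∀ v w, Γ.Adj v w → ∀ a, q v (genSub Γ w * a) = genSub Γ w * q v a := by
    intro v w h a
    apply hinj v
    rw [hq, hPgw v w h, ← mul_assoc, (genSub_comm h).eq, mul_assoc, hq, mul_sub]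
  refine ⟨fun v => AddMonoidHom.mk' (q v) fun a b => hinj v _ _ ?_, fun v a => hinj v _ _ ?_, hqX,
    fun v w h a => hinj v _ _ (hinj w _ _ ?_)⟩
  · rw [mul_add, hq, hq, hq, map_add]
    abel
  · change genSub Γ v * q v _ = _
    rw [hq, hPg, sub_zero]
  · change genSub Γ w * (genSub Γ v * q v (q w a)) = genSub Γ w * (genSub Γ v * q w (q v a))
    rw [← hqX w v h.symm, hq, hq, hq, mul_sub, ← hPgw v w h, hq, map_sub, map_sub, hPP v w h]
    abel

end Operators

section Solving

variable {V : Type} {Γ : SimpleGraph V}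

/-- The equations `(p - 1) ξ = t p` for `p` in an independent set of vertices have a common
solution in the coinduced module. -/
theorem exists_coindSub_eq (I : Set V) (hI : ∀ v ∈ I, ∀ w ∈ I, ¬Γ.Adj v w)
    (t : V → RAAGroup V Γ → GroupRing (RAAGroup V Γ)) :
    ∃ ξ, ∀ p ∈ I, coindSub Γ p ξ = t p := by
  classical
  obtain ⟨r, hr⟩ := RAAGroup.exists_hom (Γ := Γ) (fun v => if v ∈ I then FreeGroup.of v else 1)
    (by
      intro v w h
      by_cases hv : v ∈ I
      · rw [if_neg fun hw => hI v hv w hw h]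
        exact Commute.one_right _
      · rw [if_neg hv]
        exact Commute.one_left _)
  obtain ⟨d, hd, hdt⟩ := exists_crossedHom_freeGroup
    ((coindAct (RAAGroup V Γ)).comp (RAAGroup.mk V Γ)) t
  refine ⟨fun x => -d (r x) x, fun p hp => funext fun x => ?_⟩
  have h1 := hd (FreeGroup.of p) (r ((RAAGroup.of p)⁻¹ * x))
  rw [map_mul, map_inv, hr, if_pos hp, mul_inv_cancel_left, hdt] at h1
  have h2 := congrFun h1 x
  rw [Pi.add_apply, MonoidHom.comp_apply, RAAGroup.mk_of, coindAct_apply] at h2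
  rw [coindSub_apply, Pi.sub_apply, coindAct_apply, map_mul, map_inv, hr, if_pos hp, mul_neg,
    sub_neg_eq_add, h2]
  abel

/-- The action of the group ring on the coinduced module. -/
noncomputable def coindRing (G : Type) [Group G] :
    GroupRing G →+* AddMonoid.End (G → GroupRing G) :=
  MonoidAlgebra.liftNCRingHom (Int.castRingHom _) (coindAct G) fun n _ => Int.cast_commute n _

theorem coindRing_single {G : Type} [Group G] (g : G) :
    coindRing G (MonoidAlgebra.single g 1) = coindAct G g := by
  rw [coindRing, MonoidAlgebra.liftNCRingHom_single, map_one, one_mul]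

theorem coindRing_genSub (v : V) : coindRing _ (genSub Γ v) = coindSub Γ v := by
  rw [genSub, map_sub, coindRing_single, map_one]
  rfl

theorem coindRing_const {G : Type} [Group G] (a b : GroupRing G) :
    coindRing G a (Function.const G b) = Function.const G (a * b) := by
  induction a using MonoidAlgebra.induction_on with
  | of g =>
    rw [MonoidAlgebra.of_apply, coindRing_single, coindAct_const]
  | add x y hx hy =>
    rw [map_add, add_mul]
    change coindRing G x _ + coindRing G y _ = _
    rw [hx, hy]
    rfl
  | smul n x hx =>
    rw [map_zsmul, smul_mul_assoc]
    change n • coindRing G x _ = _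
    rw [hx]
    rfl

/-- The elements `p - 1`, for `p` in an independent set of vertices, are left linearly
independent. -/
theorem eq_zero_of_sum_mul_genSub (F : Finset V) (hF : ∀ v ∈ F, ∀ w ∈ F, ¬Γ.Adj v w)
    (a : V → GroupRing (RAAGroup V Γ)) (h : ∑ p ∈ F, a p * genSub Γ p = 0) :
    ∀ p ∈ F, a p = 0 := by
  classical
  intro p hp
  obtain ⟨ξ, hξ⟩ := exists_coindSub_eq (Γ := Γ) (F : Set V) hF
    (fun u => Function.const _ (if u = p then 1 else 0))
  have h1 := congrArg (fun b => coindRing _ b ξ) h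
  simp only [map_sum, map_mul, coindRing_genSub, map_zero] at h1
  have h2 : ∑ u ∈ F, coindRing _ (a u) (coindSub Γ u ξ) = 0 :=
    (AddMonoidHom.finsetSum_apply (fun u => coindRing _ (a u) * coindSub Γ u) F ξ).symm.trans h1
  rw [Finset.sum_congr rfl fun u hu => by rw [hξ u hu, coindRing_const], Finset.sum_eq_single p]
    at h2
  · have := congrFun h2 1
    simpa using this
  · intro u _ hu
    simp [hu]
  · exact fun h => absurd hp h

theorem mul_genSub_injective (v : V) {a : GroupRing (RAAGroup V Γ)} (h : a * genSub Γ v = 0) :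
    a = 0 :=
  eq_zero_of_sum_mul_genSub {v} (by simp) (fun _ => a) (by simpa using h) v (by simp)

variable {S₁ S₂ : Finset V}

theorem edgeExact_of_independent [DecidableEq V]
    (hcoverE : ∀ v w : V, Γ.Adj v w → (v ∈ S₁ ∧ w ∈ S₁) ∨ (v ∈ S₂ ∧ w ∈ S₂))
    (hΓ₀ : ∀ v w : V, v ∈ S₁ → v ∈ S₂ → w ∈ S₁ → w ∈ S₂ → ¬ Γ.Adj v w)
    (t : V → RAAGroup V Γ → GroupRing (RAAGroup V Γ)) :
    EdgeExact Γ fun v w => if v ∈ S₁ ∧ w ∈ S₁ then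
      coindSub Γ v (if w ∈ S₂ then t w else 0) - coindSub Γ w (if v ∈ S₂ then t v else 0)
      else 0 := by
  obtain ⟨ξ, hξ⟩ := exists_coindSub_eq (Γ := Γ) {v | v ∈ S₁ ∧ v ∈ S₂}
    (fun v hv w hw => hΓ₀ v w hv.1 hv.2 hw.1 hw.2) t
  refine ⟨fun v => if v ∈ S₂ then coindSub Γ v ξ else 0, fun v w h => ?_⟩
  beta_reduce
  by_cases h1 : v ∈ S₁ ∧ w ∈ S₁
  · rw [if_pos h1]
    congr 2
    · split_ifs with h2
      · exact (hξ w ⟨h1.2, h2⟩).symm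
      · rfl
    · split_ifs with h2
      · exact (hξ v ⟨h1.1, h2⟩).symm
      · rfl
  · have h2 := (hcoverE v w h).resolve_left h1
    rw [if_neg h1, if_pos h2.1, if_pos h2.2, coindSub_comm h, sub_self]

theorem EdgeExact.add {e e' : V → V → RAAGroup V Γ → GroupRing (RAAGroup V Γ)}
    (h : EdgeExact Γ e) (h' : EdgeExact Γ e') : EdgeExact Γ fun v w => e v w + e' v w := by
  obtain ⟨c, hc⟩ := h
  obtain ⟨c', hc'⟩ := h'
  refine ⟨fun v => c v + c' v, fun v w hvw => ?_⟩
  beta_reduce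
  rw [hc v w hvw, hc' v w hvw, map_add, map_add]
  abel

theorem EdgeExact.congr {e e' : V → V → RAAGroup V Γ → GroupRing (RAAGroup V Γ)}
    (h : EdgeExact Γ e) (h' : ∀ v w, Γ.Adj v w → e' v w = e v w) : EdgeExact Γ e' := by
  obtain ⟨c, hc⟩ := h
  exact ⟨c, fun v w hvw => by rw [h' v w hvw, hc v w hvw]⟩

/-- A family of integers indexed by the edges is a coboundary on each of the two pieces. -/
def HasPotentials (Γ : SimpleGraph V) (S₁ S₂ : Finset V) (κ : V → V → ℤ) : Prop :=
  ∃ h₁ h₂ : V → ℤ, (∀ v w, v ∈ S₁ → w ∈ S₁ → Γ.Adj v w → κ v w = h₁ w - h₁ v) ∧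
    ∀ v w, v ∈ S₂ → w ∈ S₂ → Γ.Adj v w → κ v w = h₂ w - h₂ v

theorem edgeExact_of_hasPotentials [DecidableEq V]
    (hcoverE : ∀ v w : V, Γ.Adj v w → (v ∈ S₁ ∧ w ∈ S₁) ∨ (v ∈ S₂ ∧ w ∈ S₂))
    (hΓ₀ : ∀ v w : V, v ∈ S₁ → v ∈ S₂ → w ∈ S₁ → w ∈ S₂ → ¬ Γ.Adj v w)
    {κ : V → V → ℤ} (hκ : HasPotentials Γ S₁ S₂ κ)
    (ν : RAAGroup V Γ → GroupRing (RAAGroup V Γ)) :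
    EdgeExact Γ fun v w => κ v w • coindSub Γ v (coindSub Γ w ν) := by
  obtain ⟨h₁, h₂, H1, H2⟩ := hκ
  refine EdgeExact.congr (EdgeExact.add
    (edgeExact_of_independent hcoverE hΓ₀ fun v => (h₁ v - h₂ v) • coindSub Γ v ν)
    (e' := fun v w => ((if w ∈ S₂ then h₂ w else h₁ w) - (if v ∈ S₂ then h₂ v else h₁ v)) •
      coindSub Γ v (coindSub Γ w ν))
    ⟨fun v => (if v ∈ S₂ then h₂ v else h₁ v) • coindSub Γ v ν, fun v w h => ?_⟩) ?_
  · beta_reduce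
    rw [map_zsmul, map_zsmul, coindSub_comm h, sub_smul]
  · intro v w h
    by_cases hS : v ∈ S₁ ∧ w ∈ S₁
    · rw [if_pos hS, H1 v w hS.1 hS.2 h]
      have : ∀ u a, (if u ∈ S₂ then (h₁ u - h₂ u) • coindSub Γ a ν else 0) =
          (h₁ u - if u ∈ S₂ then h₂ u else h₁ u) • coindSub Γ a ν := by
        intro u a
        split_ifs <;> simp
      rw [this, this, map_zsmul, map_zsmul, coindSub_comm h, ← sub_smul, ← add_smul]
      congr 1
      abel
    · have h2 := (hcoverE v w h).resolve_left hS
      rw [if_neg hS, if_pos h2.1, if_pos h2.2, zero_add, H2 v w h2.1 h2.2 h]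

end Solving

section Representatives

/-- The cohomology class of a cocycle. -/
noncomputable def cohClass (G : Type) [Group G] (n : ℕ) :
    cocyclesΛ G n →ₗ[(GroupRing G)ᵐᵒᵖ] groupCohΛ G n :=
  Submodule.mkQ ((coboundariesΛ G n).comap (cocyclesΛ G n).subtype)

theorem cohClass_surjective (G : Type) [Group G] (n : ℕ) : Function.Surjective (cohClass G n) :=
  Submodule.mkQ_surjective _

theorem cohClass_eq_zero {G : Type} [Group G] {n : ℕ} (φ : cocyclesΛ G n)
    (h : (φ : (Fin n → G) → GroupRing G) ∈ coboundariesΛ G n) : cohClass G n φ = 0 :=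
  (Submodule.Quotient.mk_eq_zero _).2 h

variable {V : Type} {Γ : SimpleGraph V}
  {f : groupCohΛ (RAAGroup V Γ) 2 →ₗ[(GroupRing (RAAGroup V Γ))ᵐᵒᵖ] GroupRing (RAAGroup V Γ)}

/-- The family `e` indexed by the edges is represented, up to a boundary, by a cocycle on whose
class `f` takes the value `z`. -/
def EdgeRep
    (f : groupCohΛ (RAAGroup V Γ) 2 →ₗ[(GroupRing (RAAGroup V Γ))ᵐᵒᵖ] GroupRing (RAAGroup V Γ))
    (e : V → V → GroupRing (RAAGroup V Γ)) (z : GroupRing (RAAGroup V Γ)) : Prop :=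
  ∃ φ : cocyclesΛ (RAAGroup V Γ) 2, ∃ m : V → GroupRing (RAAGroup V Γ),
    (∀ v w, Γ.Adj v w →
      φ.1 ![RAAGroup.of v, RAAGroup.of w] - φ.1 ![RAAGroup.of w, RAAGroup.of v] =
        e v w + (genSub Γ v * m w - genSub Γ w * m v)) ∧
    f (cohClass _ 2 φ) = z

variable {e e' : V → V → GroupRing (RAAGroup V Γ)} {z z' : GroupRing (RAAGroup V Γ)}

theorem EdgeRep.exists_of_edgeExact (h : EdgeExact Γ fun v w => Function.const _ (e v w)) :
    ∃ z, EdgeRep f e z := by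
  obtain ⟨φ, hφ, m, hm⟩ := exists_cocycle_of_edgeExact h
  exact ⟨_, ⟨φ, hφ⟩, m, hm, rfl⟩

theorem EdgeRep.eq_zero (h : EdgeRep f e z) (m : V → GroupRing (RAAGroup V Γ))
    (hm : ∀ v w, Γ.Adj v w → e v w = genSub Γ v * m w - genSub Γ w * m v) : z = 0 := by
  obtain ⟨φ, m', hm', rfl⟩ := h
  rw [cohClass_eq_zero φ (mem_coboundariesΛ_of_edges φ.2 (fun v => m v + m' v) fun v w h => ?_),
    map_zero]
  rw [hm' v w h, hm v w h, mul_add, mul_add]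
  abel

theorem EdgeRep.congr (h : EdgeRep f e z)
    (m : V → GroupRing (RAAGroup V Γ))
    (hm : ∀ v w, Γ.Adj v w → e' v w = e v w + (genSub Γ v * m w - genSub Γ w * m v)) :
    EdgeRep f e' z := by
  obtain ⟨φ, m', hm', hz⟩ := h
  refine ⟨φ, fun v => m' v - m v, fun v w h => ?_, hz⟩
  rw [hm' v w h, hm v w h, mul_sub, mul_sub]
  abel

theorem EdgeRep.congr_edges (h : EdgeRep f e z) (he : ∀ v w, Γ.Adj v w → e' v w = e v w) :
    EdgeRep f e' z :=
  h.congr 0 fun v w hvw => by simp [he v w hvw]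

theorem EdgeRep.zero : EdgeRep f (fun _ _ => 0) 0 :=
  ⟨0, 0, fun v w _ => by simp, by simp⟩

theorem EdgeRep.add (h : EdgeRep f e z) (h' : EdgeRep f e' z') :
    EdgeRep f (fun v w => e v w + e' v w) (z + z') := by
  obtain ⟨φ, m, hm, rfl⟩ := h
  obtain ⟨φ', m', hm', rfl⟩ := h'
  refine ⟨φ + φ', m + m', fun v w hvw => ?_, by rw [map_add, map_add]⟩
  change φ.1 _ + φ'.1 _ - (φ.1 _ + φ'.1 _) = _
  rw [add_sub_add_comm, hm v w hvw, hm' v w hvw, Pi.add_apply, Pi.add_apply, mul_add, mul_add,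
    add_sub_add_comm, add_add_add_comm]

theorem EdgeRep.mul (h : EdgeRep f e z) (a : GroupRing (RAAGroup V Γ)) :
    EdgeRep f (fun v w => e v w * a) (z * a) := by
  obtain ⟨φ, m, hm, rfl⟩ := h
  refine ⟨MulOpposite.op a • φ, fun v => m v * a, fun v w hvw => ?_, ?_⟩
  · change φ.1 _ * a - φ.1 _ * a = _
    rw [← sub_mul, hm v w hvw, add_mul, sub_mul, mul_assoc, mul_assoc]
  · rw [map_smul, map_smul]
    rfl

theorem EdgeRep.sum {ι : Type} (s : Finset ι) {e : ι → V → V → GroupRing (RAAGroup V Γ)}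
    {z : ι → GroupRing (RAAGroup V Γ)} (h : ∀ i ∈ s, EdgeRep f (e i) (z i)) :
    EdgeRep f (fun v w => ∑ i ∈ s, e i v w) (∑ i ∈ s, z i) := by
  classical
  induction s using Finset.induction_on with
  | empty => simpa using EdgeRep.zero
  | insert i s hi ih =>
    simp only [Finset.sum_insert hi]
    exact (h i (Finset.mem_insert_self i s)).add
      (ih fun j hj => h j (Finset.mem_insert_of_mem hj))

theorem EdgeRep.unique (h : EdgeRep f e z) (h' : EdgeRep f e z') : z = z' := by
  have := (h.add (h'.mul (-1))).eq_zero 0 (fun v w _ => by simp)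
  rwa [mul_neg, mul_one, ← sub_eq_add_neg, sub_eq_zero] at this

/-- The two vertex sets cover the graph, intersect in an independent set, and carry no first
cohomology. -/
structure AcyclicSplitting (Γ : SimpleGraph V) (S₁ S₂ : Finset V) : Prop where
  cover : ∀ v w : V, Γ.Adj v w → (v ∈ S₁ ∧ w ∈ S₁) ∨ (v ∈ S₂ ∧ w ∈ S₂)
  independent : ∀ v w : V, v ∈ S₁ → v ∈ S₂ → w ∈ S₁ → w ∈ S₂ → ¬ Γ.Adj v w
  hasPotentials : ∀ κ : V → V → ℤ, (∀ v w, Γ.Adj v w → κ v w = -κ w v) →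
    (∀ u v w, Γ.Adj u v → Γ.Adj v w → Γ.Adj u w → κ u v + κ v w = κ u w) →
    HasPotentials Γ S₁ S₂ κ

variable [DecidableEq V] {S₁ S₂ : Finset V}

theorem EdgeRep.of_hasPotentials (hS : AcyclicSplitting Γ S₁ S₂) {κ : V → V → ℤ}
    (hκ : HasPotentials Γ S₁ S₂ κ) :
    EdgeRep f (fun v w => κ v w • (genSub Γ v * genSub Γ w)) 0 := by
  obtain ⟨h₁, h₂, H1, H2⟩ := hκ
  let B : V → V → V → GroupRing (RAAGroup V Γ) := fun p v w =>
    if v ∈ S₁ ∧ w ∈ S₁ then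
      genSub Γ v * (if w = p then 1 else 0) - genSub Γ w * (if v = p then 1 else 0) else 0
  have hB : ∀ p, ∃ a, p ∈ S₁ ∩ S₂ → EdgeRep f (B p) a := by
    intro p
    by_cases hp : p ∈ S₁ ∩ S₂
    · rw [Finset.mem_inter] at hp
      obtain ⟨a, ha⟩ := EdgeRep.exists_of_edgeExact (f := f) (e := B p)
        ((edgeExact_of_independent hS.cover hS.independent
          fun v => Function.const _ (if v = p then 1 else 0)).congr fun v w hvw => by
          have : ∀ u, (if u ∈ S₂ then Function.const (RAAGroup V Γ)
              (if u = p then (1 : GroupRing (RAAGroup V Γ)) else 0) else 0) =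
              Function.const _ (if u = p then 1 else 0) := by
            intro u
            by_cases hu : u = p
            · rw [if_pos (hu ▸ hp.2)]
            · rw [if_neg hu]
              exact ite_self _
          rw [this, this, coindSub_const, coindSub_const]
          simp only [B]
          split_ifs <;> rfl)
      exact ⟨a, fun _ => ha⟩
    · exact ⟨0, fun h => absurd h hp⟩
  choose a ha using hB
  have hsum : ∀ (n : V → ℤ) (v w : V), ∑ p ∈ S₁ ∩ S₂, B p v w * (n p • genSub Γ p) =
      if v ∈ S₁ ∧ w ∈ S₁ then
        genSub Γ v * (if w ∈ S₂ then n w • genSub Γ w else 0) -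
        genSub Γ w * (if v ∈ S₂ then n v • genSub Γ v else 0) else 0 := by
    intro n v w
    by_cases h : v ∈ S₁ ∧ w ∈ S₁
    · simp only [B, if_pos h, sub_mul, Finset.sum_sub_distrib, mul_assoc, ← Finset.mul_sum,
        ite_mul, one_mul, zero_mul, Finset.sum_ite_eq, Finset.mem_inter, h.1, h.2, true_and,
        if_true]
    · simp only [B, if_neg h, zero_mul, Finset.sum_const_zero]
  have ha0 : ∀ p ∈ S₁ ∩ S₂, a p = 0 := by
    refine eq_zero_of_sum_mul_genSub (Γ := Γ) _ ?_ a ?_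
    · intro v hv w hw
      rw [Finset.mem_inter] at hv hw
      exact hS.independent v w hv.1 hv.2 hw.1 hw.2
    · refine (EdgeRep.sum (f := f) (S₁ ∩ S₂) fun p hp => (ha p hp).mul (genSub Γ p)).eq_zero
        (fun v => if v ∈ S₂ then genSub Γ v else 0) fun v w h => ?_
      have h1 := hsum (fun _ => 1) v w
      simp only [one_smul] at h1
      rw [h1]
      by_cases hv : v ∈ S₁ ∧ w ∈ S₁
      · rw [if_pos hv]
      · have h2 := (hS.cover v w h).resolve_left hv
        rw [if_neg hv, if_pos h2.1, if_pos h2.2, (genSub_comm h).eq, sub_self]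
  have hrep := EdgeRep.sum (f := f) (S₁ ∩ S₂) fun p hp =>
    (ha p hp).mul ((h₁ p - h₂ p) • genSub Γ p)
  rw [Finset.sum_eq_zero fun p hp => by rw [ha0 p hp, zero_mul]] at hrep
  refine hrep.congr (fun v => (if v ∈ S₂ then h₂ v else h₁ v) • genSub Γ v) fun v w h => ?_
  rw [hsum (fun p => h₁ p - h₂ p)]
  simp only [mul_smul_comm]
  by_cases hv : v ∈ S₁ ∧ w ∈ S₁
  · rw [if_pos hv, H1 v w hv.1 hv.2 h]
    have : ∀ u, (if u ∈ S₂ then (h₁ u - h₂ u) • genSub Γ u else 0) =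
        (h₁ u - if u ∈ S₂ then h₂ u else h₁ u) • genSub Γ u := by
      intro u
      split_ifs <;> simp
    rw [this, this, mul_smul_comm, mul_smul_comm, (genSub_comm h).eq, ← sub_smul, ← sub_smul,
      ← add_smul]
    congr 1
    abel
  · have h2 := (hS.cover v w h).resolve_left hv
    rw [if_neg hv, if_pos h2.1, if_pos h2.2, zero_add, H2 v w h2.1 h2.2 h, (genSub_comm h).eq,
      sub_smul]

/-- Families `(v - 1) (w - 1) K v w` for a cocycle `K` with values in the group ring. -/
theorem EdgeRep.of_cocycle [Fintype V] (hS : AcyclicSplitting Γ S₁ S₂)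
    (K : V → V → GroupRing (RAAGroup V Γ)) (hanti : ∀ v w, Γ.Adj v w → K v w = -K w v)
    (htri : ∀ u v w, Γ.Adj u v → Γ.Adj v w → Γ.Adj u w → K u v + K v w = K u w) :
    EdgeRep f (fun v w => genSub Γ v * (genSub Γ w * K v w)) 0 := by
  classical
  let s : Finset (RAAGroup V Γ) := Finset.univ.biUnion fun p : V × V => (K p.1 p.2).coeff.support
  have hK : ∀ v w, K v w = ∑ g ∈ s, (K v w).coeff g • MonoidAlgebra.single g 1 := by
    intro v w
    ext x
    rw [MonoidAlgebra.coeff_sum, Finsupp.finsetSum_apply]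
    simp only [MonoidAlgebra.coeff_smul, MonoidAlgebra.coeff_single, Finsupp.smul_apply,
      Finsupp.single_apply, smul_eq_mul, mul_ite, mul_one, mul_zero, Finset.sum_ite_eq']
    split_ifs with hx
    · rfl
    · by_contra h
      exact hx (Finset.mem_biUnion.2 ⟨(v, w), Finset.mem_univ _, Finsupp.mem_support_iff.2 h⟩)
  have h := EdgeRep.sum (f := f) s fun g _ => (EdgeRep.of_hasPotentials (f := f) hS
    (hS.hasPotentials (fun v w => (K v w).coeff g)
      (fun v w hvw => by rw [hanti v w hvw]; rfl)
      (fun u v w h₁ h₂ h₃ => by rw [← htri u v w h₁ h₂ h₃]; rfl))).mul (MonoidAlgebra.single g 1)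
  simp only [zero_mul, Finset.sum_const_zero] at h
  refine h.congr_edges fun v w _ => ?_
  conv_lhs => rw [hK v w, ← mul_assoc, Finset.mul_sum]
  refine Finset.sum_congr rfl fun g _ => ?_
  rw [mul_smul_comm, smul_mul_assoc]

theorem EdgeRep.of_star_int (hS : AcyclicSplitting Γ S₁ S₂) (w : V) (χ : V → ℤ)
    (hχ : ∀ u u', Γ.Adj w u → Γ.Adj w u' → Γ.Adj u u' → χ u = χ u') :
    EdgeRep f (fun a b => if a = w then χ b • genSub Γ b else
      if b = w then -(χ a • genSub Γ a) else 0) 0 := by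
  have hpot : HasPotentials Γ S₁ S₂ fun a b =>
      if a = w then χ b else if b = w then -χ a else 0 := by
    refine hS.hasPotentials _ (fun a b h => ?_) fun u v x huv hvx hux => ?_
    · have := h.ne
      split_ifs <;> simp_all
    · have h1 := huv.ne
      have h2 := hvx.ne
      have h3 := hux.ne
      by_cases hu : u = w
      · subst hu
        simp [h1.symm, h3.symm, hχ v x huv hux hvx]
      · by_cases hv : v = w
        · subst hv
          simp [h1, h2.symm, hχ u x huv.symm hvx hux]
        · by_cases hx : x = w
          · subst hx
            simp [h2, h3, hχ u v hux.symm hvx.symm huv]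
          · simp [hu, hv, hx]
  obtain ⟨ν, hν⟩ := exists_coindSub_eq (Γ := Γ) {w} (by simp) fun _ => Function.const _ 1
  replace hν := hν w rfl
  obtain ⟨z, hz⟩ := EdgeRep.exists_of_edgeExact (f := f) (e := fun a b =>
      if a = w then χ b • genSub Γ b else if b = w then -(χ a • genSub Γ a) else 0)
    ((edgeExact_of_hasPotentials hS.cover hS.independent hpot ν).congr fun a b h => by
      by_cases ha : a = w
      · subst ha
        rw [if_pos rfl, if_pos rfl, coindSub_comm h, hν, coindSub_const, mul_one]
        rfl
      · by_cases hb : b = w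
        · subst hb
          rw [if_neg ha, if_neg ha, if_pos rfl, if_pos rfl, hν, coindSub_const, mul_one,
            ← neg_smul]
          rfl
        · rw [if_neg ha, if_neg ha, if_neg hb, if_neg hb, zero_smul]
          rfl)
  have h0 := (hz.mul (genSub Γ w)).unique ((EdgeRep.of_hasPotentials hS hpot).congr_edges
    fun a b h => by
      by_cases ha : a = w
      · subst ha
        rw [if_pos rfl, if_pos rfl, smul_mul_assoc, (genSub_comm h).eq]
      · by_cases hb : b = w
        · subst hb
          rw [if_neg ha, if_neg ha, if_pos rfl, if_pos rfl, neg_mul, smul_mul_assoc, neg_smul]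
        · rw [if_neg ha, if_neg ha, if_neg hb, if_neg hb, zero_smul, zero_mul])
  rwa [mul_genSub_injective w h0] at hz

/-- Families supported on the star of a vertex `w`. -/
theorem EdgeRep.of_star [Fintype V] (hS : AcyclicSplitting Γ S₁ S₂) (w : V)
    (M : V → GroupRing (RAAGroup V Γ))
    (hM : ∀ u u', Γ.Adj w u → Γ.Adj w u' → Γ.Adj u u' → M u = M u') :
    EdgeRep f (fun a b => if a = w then genSub Γ b * M b else
      if b = w then -(genSub Γ a * M a) else 0) 0 := by
  classical
  have h := EdgeRep.sum (f := f) (Finset.univ.image M) fun z _ =>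
    (EdgeRep.of_star_int (f := f) hS w (fun u => if M u = z then 1 else 0)
    (fun u u' h₁ h₂ h₃ => by rw [hM u u' h₁ h₂ h₃])).mul z
  simp only [zero_mul, Finset.sum_const_zero] at h
  have hsum : ∀ u, ∑ z ∈ Finset.univ.image M, ((if M u = z then (1 : ℤ) else 0) • genSub Γ u) * z =
      genSub Γ u * M u := by
    intro u
    simp only [ite_smul, one_smul, zero_smul, ite_mul, zero_mul]
    rw [Finset.sum_ite_eq, if_pos (Finset.mem_image_of_mem M (Finset.mem_univ u))]
  refine h.congr_edges fun a b _ => ?_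
  by_cases ha : a = w
  · simp only [if_pos ha, hsum]
  · by_cases hb : b = w
    · simp only [if_neg ha, if_pos hb, neg_mul, Finset.sum_neg_distrib, hsum]
    · simp only [if_neg ha, if_neg hb, zero_mul, Finset.sum_const_zero]

/-- Families supported on an edge that is contained in no triangle. -/
theorem EdgeRep.of_edge (hS : AcyclicSplitting Γ S₁ S₂) {v w : V} (hvw : Γ.Adj v w)
    (hmax : ∀ u, Γ.Adj u v → ¬Γ.Adj u w) (a : GroupRing (RAAGroup V Γ)) :
    EdgeRep f (fun x y => if x = v ∧ y = w then a else if x = w ∧ y = v then -a else 0) 0 := by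
  have hne := hvw.ne
  have hpot : HasPotentials Γ S₁ S₂ fun x y =>
      if x = v ∧ y = w then 1 else if x = w ∧ y = v then -1 else 0 := by
    refine hS.hasPotentials _ (fun x y h => ?_) fun x y u hxy hyu hxu => ?_
    · split_ifs <;> simp_all
    · have key : ∀ x y u, Γ.Adj x y → Γ.Adj y u → Γ.Adj x u →
          (if x = v ∧ y = w then (1 : ℤ) else if x = w ∧ y = v then -1 else 0) = 0 := by
        intro x y u hxy hyu hxu
        rw [if_neg, if_neg]
        · rintro ⟨rfl, rfl⟩
          exact hmax u hyu.symm hxu.symm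
        · rintro ⟨rfl, rfl⟩
          exact hmax u hxu.symm hyu.symm
      rw [key x y u hxy hyu hxu, key y u x hyu hxu.symm hxy.symm,
        key x u y hxu hyu.symm hxy, add_zero]
  obtain ⟨η, hη⟩ := exists_coindSub_eq (Γ := Γ) {v} (by simp) fun _ => Function.const _ 1
  obtain ⟨ν, hν⟩ := exists_coindSub_eq (Γ := Γ) {w} (by simp) fun _ => η
  replace hη := hη v rfl
  replace hν := hν w rfl
  obtain ⟨z, hz⟩ := EdgeRep.exists_of_edgeExact (f := f) (e := fun x y =>
      if x = v ∧ y = w then 1 else if x = w ∧ y = v then -1 else 0)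
    ((edgeExact_of_hasPotentials hS.cover hS.independent hpot ν).congr fun x y h => by
      by_cases h1 : x = v ∧ y = w
      · rw [if_pos h1, if_pos h1, h1.1, h1.2, hν, hη, one_smul]
      · by_cases h2 : x = w ∧ y = v
        · rw [if_neg h1, if_neg h1, if_pos h2, if_pos h2, h2.1, h2.2, coindSub_comm hvw.symm, hν,
            hη, neg_smul, one_smul]
          rfl
        · rw [if_neg h1, if_neg h1, if_neg h2, if_neg h2, zero_smul]
          rfl)
  have hstar := EdgeRep.of_star_int (f := f) hS w (fun u => if u = v then -1 else 0)
    (fun u u' h₁ h₂ h₃ => by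
      rw [if_neg, if_neg]
      · rintro rfl
        exact hmax u h₃ h₁.symm
      · rintro rfl
        exact hmax u' h₃.symm h₂.symm)
  have h0 := (hz.mul (genSub Γ v)).unique (hstar.congr_edges fun x y h => by
    have h' := h.ne
    by_cases h1 : x = v
    · subst h1
      by_cases h2 : y = w <;> simp [h2, hne]
    · by_cases h2 : x = w
      · subst h2
        by_cases h3 : y = v <;> simp [h3, h1]
      · simp [h1, h2])
  have h1 := hz.mul a
  rw [mul_genSub_injective v h0, zero_mul] at h1
  refine h1.congr_edges fun x y _ => ?_
  split_ifs <;> simp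

end Representatives

section Decomposition

variable {V : Type} [Fintype V] [DecidableEq V] {Γ : SimpleGraph V} {S₁ S₂ : Finset V}
  {f : groupCohΛ (RAAGroup V Γ) 2 →ₗ[(GroupRing (RAAGroup V Γ))ᵐᵒᵖ] GroupRing (RAAGroup V Γ)}

/-- Antisymmetric families supported on the edges that are contained in no triangle. -/
theorem EdgeRep.of_maximal_edges (hS : AcyclicSplitting Γ S₁ S₂)
    (L : V → V → GroupRing (RAAGroup V Γ)) (hanti : ∀ v w, Γ.Adj v w → L w v = -L v w)
    (hL : ∀ u v w, Γ.Adj u v → Γ.Adj v w → Γ.Adj u w → L v w = 0) :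
    EdgeRep f (fun v w => L v w + L v w) 0 := by
  classical
  let s : Finset (V × V) := Finset.univ.filter fun p =>
    Γ.Adj p.1 p.2 ∧ ∀ u, Γ.Adj u p.1 → ¬Γ.Adj u p.2
  have hs : ∀ v w, Γ.Adj v w → (v, w) ∉ s → L v w = 0 := by
    intro v w hvw h
    simp only [s, Finset.mem_filter, Finset.mem_univ, true_and, not_and, not_forall,
      not_not] at h
    obtain ⟨u, huv, huw⟩ := h hvw
    exact hL u v w huv hvw huw
  have h := EdgeRep.sum (f := f) s fun p hp => EdgeRep.of_edge (f := f) hS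
    (Finset.mem_filter.1 hp).2.1 (Finset.mem_filter.1 hp).2.2 (L p.1 p.2)
  rw [Finset.sum_const_zero] at h
  refine h.congr_edges fun v w hvw => ?_
  have hne := hvw.ne
  have hterm : ∀ p : V × V, (if v = p.1 ∧ w = p.2 then L p.1 p.2 else
      if v = p.2 ∧ w = p.1 then -L p.1 p.2 else 0) =
      (if p = (v, w) then L p.1 p.2 else 0) + if p = (w, v) then -L p.1 p.2 else 0 := by
    rintro ⟨a, b⟩
    simp only [Prod.mk.injEq]
    by_cases h1 : v = a ∧ w = b
    · rw [if_pos h1, if_pos ⟨h1.1.symm, h1.2.symm⟩,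
        if_neg fun h => hne (h1.1.trans h.1), add_zero]
    · rw [if_neg h1, if_neg (show ¬(a = v ∧ b = w) from fun h => h1 ⟨h.1.symm, h.2.symm⟩),
        zero_add]
      by_cases h2 : v = b ∧ w = a
      · rw [if_pos h2, if_pos ⟨h2.2.symm, h2.1.symm⟩]
      · rw [if_neg h2, if_neg fun h => h2 ⟨h.2.symm, h.1.symm⟩]
  rw [Finset.sum_congr rfl fun p _ => hterm p, Finset.sum_add_distrib, Finset.sum_ite_eq',
    Finset.sum_ite_eq']
  congr 1
  · split_ifs with h1
    · rfl
    · exact hs v w hvw h1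
  · split_ifs with h1
    · rw [hanti v w hvw, neg_neg]
    · rw [← neg_neg (L v w), ← hanti v w hvw, hs w v hvw.symm h1, neg_zero]

theorem eq_zero_of_acyclicSplitting (hS : AcyclicSplitting Γ S₁ S₂)
    (φ : cocyclesΛ (RAAGroup V Γ) 2) : f (cohClass _ 2 φ) = 0 := by
  obtain ⟨Q, hQ, hQX, hQQ⟩ := exists_leftInverse_genSub Γ
  set X := genSub Γ with hX
  set e : V → V → GroupRing (RAAGroup V Γ) := fun v w =>
    φ.1 ![RAAGroup.of v, RAAGroup.of w] - φ.1 ![RAAGroup.of w, RAAGroup.of v] with he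
  have hanti : ∀ v w, e w v = -e v w := fun v w => (neg_sub _ _).symm
  have hXX : ∀ v w, Γ.Adj v w → ∀ a, X w * (X v * a) = X v * (X w * a) := fun v w h a => by
    rw [← mul_assoc, ← (genSub_comm h).eq, mul_assoc]
  have hsolve : ∀ u v w, Γ.Adj u v → Γ.Adj v w → Γ.Adj u w →
      e v w = X v * Q u (e u w) - X w * Q u (e u v) := by
    intro u v w huv hvw huw
    have htri : X u * e v w - X v * e u w + X w * e u v = 0 :=
      edge_triangle (e := e) φ.2 (fun _ _ _ => rfl) huv hvw huw
    have h := congrArg (Q u) htri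
    rw [map_add, map_sub, hQ, hQX u v huv, hQX u w huw, map_zero] at h
    rw [← sub_eq_zero, ← h]
    abel
  have hedge := EdgeRep.of_maximal_edges (f := f) hS
    (fun v w => e v w - X w * Q w (e v w) - X v * Q v (e v w) + X v * (X w * Q v (Q w (e v w))))
    (fun v w h => by
      rw [hanti v w]
      simp only [map_neg, mul_neg]
      rw [hXX v w h, hQQ v w h]
      abel)
    (fun u v w huv hvw huw => by
      rw [hsolve u v w huv hvw huw]
      simp only [map_sub, hQ, hQX v w hvw, hQX w v hvw.symm, mul_sub]
      rw [hXX v w hvw]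
      abel)
  have hstar := EdgeRep.sum (f := f) Finset.univ fun (v : V) _ => EdgeRep.of_star (f := f) hS v
    (fun w => Q w (e v w) - X v * Q v (Q w (e v w))) (fun u w hvu hvw huw => by
      rw [hsolve u v w hvu.symm hvw huw, hanti u v]
      simp only [map_sub, map_neg, hQ, hQX w v hvw.symm, mul_sub, mul_neg]
      abel)
  have hcoc := EdgeRep.of_cocycle (f := f) hS (fun v w => Q v (Q w (e v w)))
    (fun v w h => by rw [hanti w v, map_neg, map_neg, hQQ v w h])
    (fun u v w huv hvw huw => by
      rw [hsolve u v w huv hvw huw]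
      simp only [map_sub, hQ, hQX w v hvw.symm]
      rw [hQQ u v huv, hQQ u w huw]
      abel)
  have hφ : EdgeRep f e (f (cohClass _ 2 φ)) := ⟨φ, 0, fun v w _ => by simp [he], rfl⟩
  have hzero : f (cohClass _ 2 φ) + f (cohClass _ 2 φ) = 0 + ((0 + 0) + (0 + 0)) := by
    rw [Finset.sum_const_zero] at hstar
    refine (hφ.add hφ).unique ((hedge.add ((hstar.add hstar).add (hcoc.add hcoc))).congr_edges
      fun v w h => ?_)
    have hsum : (∑ u, if v = u then X w * (Q w (e u w) - X u * Q u (Q w (e u w))) else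
        if w = u then -(X v * (Q v (e u v) - X u * Q u (Q v (e u v)))) else 0) =
        X w * (Q w (e v w) - X v * Q v (Q w (e v w))) +
        -(X v * (Q v (e w v) - X w * Q w (Q v (e w v)))) := by
      rw [← Finset.add_sum_erase _ _ (Finset.mem_univ v), if_pos rfl]
      congr 1
      rw [Finset.sum_eq_single_of_mem w
        (Finset.mem_erase.2 ⟨h.ne', Finset.mem_univ w⟩), if_neg h.ne, if_pos rfl]
      intro u hu huw
      rw [if_neg (Finset.ne_of_mem_erase hu).symm, if_neg huw.symm]
    rw [hsum, hanti v w]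
    simp only [map_neg, mul_neg, mul_sub]
    rw [hXX v w h, hQQ w v h.symm]
    abel
  rw [add_zero, add_zero, add_zero] at hzero
  ext x
  have := DFunLike.congr_fun (congrArg MonoidAlgebra.coeff hzero) x
  rw [MonoidAlgebra.coeff_add, Finsupp.add_apply] at this
  simp only [MonoidAlgebra.coeff_zero, Finsupp.zero_apply] at this ⊢
  omega

end Decomposition

/-- Let `π` be a right-angled Artin group with defining graph `Γ`. Suppose
`Γ` is the union of two induced subgraphs `Γ₁`, `Γ₂` intersecting in `Γ₀ = Γ₁ ∩ Γ₂`, where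
`Γ₁` and `Γ₂` are connected with 2-connected flag complexes and `Γ₀` is a disjoint union of
vertices. Then `Hom_Λ(H²(π; Λ), Λ) = 0`. -/
theorem statement8 (V : Type) [Fintype V] [DecidableEq V] (Γ : SimpleGraph V)
    (S₁ S₂ : Finset V)
    (hcoverV : ∀ v : V, v ∈ S₁ ∨ v ∈ S₂)
    (hcoverE : ∀ v w : V, Γ.Adj v w → (v ∈ S₁ ∧ w ∈ S₁) ∨ (v ∈ S₂ ∧ w ∈ S₂))
    (hconn₁ : (Γ.induce (↑S₁ : Set V)).Connected)
    (hconn₂ : (Γ.induce (↑S₂ : Set V)).Connected)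
    (h2conn₁ : TwoConnected (flagRealization ↑(↑S₁ : Set V) (Γ.induce ↑S₁)))
    (h2conn₂ : TwoConnected (flagRealization ↑(↑S₂ : Set V) (Γ.induce ↑S₂)))
    (hΓ₀ : ∀ v w : V, v ∈ S₁ → v ∈ S₂ → w ∈ S₁ → w ∈ S₂ → ¬ Γ.Adj v w) :
    ∀ f : groupCohΛ (RAAGroup V Γ) 2 →ₗ[(GroupRing (RAAGroup V Γ))ᵐᵒᵖ]
      GroupRing (RAAGroup V Γ), f = 0 := by
  have hS : AcyclicSplitting Γ S₁ S₂ :=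
    { cover := hcoverE
      independent := hΓ₀
      hasPotentials := fun κ hanti htri => by
        obtain ⟨h₁, H1⟩ := exists_potential_of_twoConnected S₁ h2conn₁ κ hanti htri
        obtain ⟨h₂, H2⟩ := exists_potential_of_twoConnected S₂ h2conn₂ κ hanti htri
        exact ⟨h₁, h₂, H1, H2⟩ }
  intro f
  refine LinearMap.ext fun x => ?_
  obtain ⟨φ, rfl⟩ := cohClass_surjective _ 2 x
  exact eq_zero_of_acyclicSplitting hS φ
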